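/- arXiv:math/0303330 — 3 statements merged into one kernel-verified Lean document; each statement's English description precedes it below -/
import Mathlib

section
/- Let $p \geq q \geq 1$ be natural numbers. In the polynomial ring $R = \mathbb{C}[x_{ij} : 1 \leq i \leq p, 1 \leq j \leq q]$, consider the generic $p \times q$ matrix $X = (x_{ij})$ and let $I \subset R$ be the ideal generated by all $q \times q$ minors of $X$ (the determinants of the $q \times q$ submatrices obtained by choosing $q$ of the $p$ rows). Then $I$ is a prime ideal of $R$. -/
/-- The generic `p × q` matrix over `ℂ`, whose entries are the variables of the
polynomial ring `ℂ[x_{ij}]`. -/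
noncomputable def genericMatrix (p q : ℕ) :
    Matrix (Fin p) (Fin q) (MvPolynomial (Fin p × Fin q) ℂ) :=
  Matrix.of fun i j => MvPolynomial.X (i, j)

/-- The ideal generated by all maximal (`q × q`) minors of the generic `p × q` matrix. -/
noncomputable def maximalMinorsIdeal (p q : ℕ) : Ideal (MvPolynomial (Fin p × Fin q) ℂ) :=
  Ideal.span (Set.range fun σ : Fin q ↪ Fin p => ((genericMatrix p q).submatrix σ id).det)

/-!
Modulo the ideal `I` of maximal minors, the monomials divisible by no main diagonal term `∏ₖ
x_{σ(k),k}` (`σ` increasing) span, because by the rearrangement inequality the weight `x_{ij} ↦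
ij` makes this term the leading one. A linear combination `g` of such monomials that vanishes at
all matrices whose last column depends linearly on the previous ones is zero. Indeed, let `i` be
the last row and `j` the last column. If `x_{ij}` occurs in `g`, letting it tend to infinity shows
that the part of `g` of top degree in `x_{ij}` vanishes as soon as column `j - 1` depends on the
previous ones in the rows above `i`; otherwise row `i` imposes no condition on the other rows.
Either way one concludes by induction on the rows. So `I` is the kernel of a ring homomorphism to
a polynomial ring, given by the generic matrix whose last column is a linear combination of the
previous ones.
-/

open MvPolynomial Finset Filter

section Reduction

variable {τ R : Type*} [CommRing R]

theorem restrictScalars_sup_restrictSupport_eq_top (I : Ideal (MvPolynomial τ R))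
    (w : (τ →₀ ℕ) →+ ℕ) (D : Set (τ →₀ ℕ))
    (hD : ∀ d ∈ D, ∃ f ∈ I, ∀ m ∈ (monomial d 1 - f).support, w m < w d) :
    I.restrictScalars R ⊔ restrictSupport R {m | ∀ d ∈ D, ¬ d ≤ m} = ⊤ := by
  set M := I.restrictScalars R ⊔ restrictSupport R {m | ∀ d ∈ D, ¬ d ≤ m}
  have monomial_mem (m : τ →₀ ℕ) : monomial m (1 : R) ∈ M := by
    induction hm : w m using Nat.strong_induction_on generalizing m with | _ n ih
    by_cases hstd : ∀ d ∈ D, ¬ d ≤ m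
    · exact Submodule.mem_sup_right ((monomial_mem_restrictSupport R).mpr (.inl hstd))
    push Not at hstd
    obtain ⟨d, hd, hdm⟩ := hstd
    obtain ⟨e, rfl⟩ := exists_add_of_le hdm
    obtain ⟨f, hf, hlt⟩ := hD d hd
    have split : monomial (d + e) (1 : R) =
        monomial e 1 * f + monomial e 1 * (monomial d 1 - f) := by
      rw [← mul_add, add_sub_cancel, monomial_mul, one_mul, add_comm]
    rw [split]
    refine M.add_mem (Submodule.mem_sup_left (I.mul_mem_left _ hf)) ?_
    rw [MvPolynomial.as_sum (monomial d 1 - f), mul_sum]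
    refine M.sum_mem fun m hm' => ?_
    have hmul : monomial e 1 * monomial m (coeff m (monomial d 1 - f)) =
        coeff m (monomial d 1 - f) • monomial (e + m) (1 : R) := by
      rw [monomial_mul, smul_monomial, one_mul, smul_eq_mul, mul_one]
    rw [hmul]
    refine M.smul_mem _ (ih _ ?_ _ rfl)
    have := hlt m hm'
    rw [map_add] at hm ⊢
    lia
  refine eq_top_iff.mpr fun f _ => ?_
  rw [f.as_sum]
  refine M.sum_mem fun m _ => ?_
  simpa [smul_monomial] using M.smul_mem (coeff m f) (monomial_mem m)

end Reduction

section Diagonal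

variable {ι κ R : Type*} [Fintype κ] [CommRing R]

/-- The exponent vector of the monomial `∏ₖ x_{σ(k), k}`. For increasing `σ` this is the main
diagonal term of the maximal minor on the rows in the image of `σ`. -/
noncomputable def diagonalExponent (σ : κ → ι) : ι × κ →₀ ℕ :=
  ∑ k, Finsupp.single (σ k, k) 1

theorem diagonalExponent_le {σ : κ → ι} {m : ι × κ →₀ ℕ} (h : ∀ k, m (σ k, k) ≠ 0) :
    diagonalExponent σ ≤ m := by
  classical
  rintro ⟨i, j⟩
  have value : diagonalExponent σ (i, j) = if σ j = i then 1 else 0 := by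
    simp [diagonalExponent, Finsupp.finsetSum_apply, Finsupp.single_apply,
      and_comm (a := σ _ = i), ite_and]
  rw [value]
  split_ifs with hi
  · exact Nat.one_le_iff_ne_zero.mpr (hi ▸ h j)
  · exact Nat.zero_le _

theorem weight_diagonalExponent (w : ι × κ → ℕ) (σ : κ → ι) :
    Finsupp.weight w (diagonalExponent σ) = ∑ k, w (σ k, k) := by
  simp [diagonalExponent, Finsupp.weight_single]

theorem det_submatrix_mvPolynomialX [DecidableEq κ] (σ : κ → ι) :
    ((Matrix.mvPolynomialX ι κ R).submatrix σ id).det =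
      ∑ π : Equiv.Perm κ, Equiv.Perm.sign π • monomial (diagonalExponent (σ ∘ π)) (1 : R) := by
  simp only [Matrix.det_apply, diagonalExponent, monomial_sum_one]
  rfl

theorem exists_perm_of_mem_support_sub_det [DecidableEq κ] {σ : κ → ι} {m : ι × κ →₀ ℕ}
    (hm : m ∈ (monomial (diagonalExponent σ) (1 : R) -
      ((Matrix.mvPolynomialX ι κ R).submatrix σ id).det).support) :
    ∃ π : Equiv.Perm κ, π ≠ 1 ∧ m = diagonalExponent (σ ∘ π) := by
  classical
  rw [det_submatrix_mvPolynomialX, ← add_sum_erase _ _ (mem_univ 1), Equiv.Perm.sign_one, one_smul,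
    Equiv.Perm.coe_one, Function.comp_id, sub_add_cancel_left, support_neg] at hm
  obtain ⟨π, hπ, hm⟩ := mem_biUnion.mp (support_sum hm)
  rw [Units.smul_def] at hm
  exact ⟨π, ne_of_mem_erase hπ, mem_singleton.mp (support_monomial_subset (support_smul hm))⟩

end Diagonal

theorem sum_comp_perm_mul_lt_sum_mul {κ A : Type*} [Fintype κ] [LinearOrder κ] [Semiring A]
    [LinearOrder A] [IsStrictOrderedRing A] [ExistsAddOfLE A] {f g : κ → A} (hf : StrictMono f)
    (hg : StrictMono g) {π : Equiv.Perm κ} (hπ : π ≠ 1) : ∑ k, f (π k) * g k < ∑ k, f k * g k := by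
  have hmono : Monovary f g := hf.monotone.monovary hg.monotone
  refine hmono.sum_comp_perm_mul_lt_sum_mul_iff.mpr fun hcomp => hπ ?_
  have hπ_mono : StrictMono π :=
    fun a b hab => (hf.le_iff_le.mp (hcomp (hg hab))).lt_of_ne (π.injective.ne hab.ne)
  exact DFunLike.coe_injective ((hπ_mono.range_inj strictMono_id).mp (by simp))

/-- The ideal of maximal minors of the generic `p × q` matrix over an arbitrary commutative
ring. -/
noncomputable def minorsIdeal (R : Type*) [CommRing R] (p q : ℕ) :
    Ideal (MvPolynomial (Fin p × Fin q) R) :=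
  Ideal.span (Set.range fun σ : Fin q ↪ Fin p =>
    ((Matrix.mvPolynomialX (Fin p) (Fin q) R).submatrix σ id).det)

theorem minorsIdeal_sup_restrictSupport_eq_top (R : Type*) [CommRing R] (p q : ℕ) :
    (minorsIdeal R p q).restrictScalars R ⊔
      restrictSupport R {m | ∀ σ : Fin q → Fin p, StrictMono σ → ¬ diagonalExponent σ ≤ m} = ⊤ := by
  have key := restrictScalars_sup_restrictSupport_eq_top (minorsIdeal R p q)
    (Finsupp.weight fun s => (s.1 : ℕ) * s.2) (diagonalExponent '' {σ | StrictMono σ}) ?_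
  · simpa only [Set.forall_mem_image, Set.mem_ofPred_eq] using key
  rintro _ ⟨σ, hσ : StrictMono σ, rfl⟩
  refine ⟨_, Ideal.subset_span ⟨⟨σ, hσ.injective⟩, rfl⟩, fun m hm => ?_⟩
  obtain ⟨π, hπ, rfl⟩ := exists_perm_of_mem_support_sub_det hm
  rw [weight_diagonalExponent, weight_diagonalExponent]
  exact sum_comp_perm_mul_lt_sum_mul (Fin.val_strictMono.comp hσ) Fin.val_strictMono hπ

section Degeneration

variable {τ K : Type*} [Field K] [Infinite K]

theorem eval_weightedHomogeneousComponent_eq_zero_of_eventually {g : MvPolynomial τ K} {w : τ → ℕ}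
    {n : ℕ} (hn : ∀ m ∈ g.support, Finsupp.weight w m ≤ n) (u : τ → Polynomial K)
    (hg : ∀ᶠ t in cofinite, eval (fun s => (u s).eval t / t ^ w s) g = 0) :
    eval (fun s => (u s).eval 0) (weightedHomogeneousComponent w n g) = 0 := by
  let F : Polynomial K := ∑ m ∈ g.support, Polynomial.C (coeff m g) *
    Polynomial.X ^ (n - Finsupp.weight w m) * ∏ s ∈ m.support, u s ^ m s
  have F_eval (t : K) : F.eval t = ∑ m ∈ g.support,
      coeff m g * t ^ (n - Finsupp.weight w m) * ∏ s ∈ m.support, (u s).eval t ^ m s := by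
    simp [F, Polynomial.eval_finsetSum, Polynomial.eval_prod]
  have F_eval_ne_zero {t : K} (ht : t ≠ 0) :
      F.eval t = t ^ n * eval (fun s => (u s).eval t / t ^ w s) g := by
    rw [F_eval, eval_eq, mul_sum]
    refine sum_congr rfl fun m hm => ?_
    have hpow : ∏ s ∈ m.support, (t ^ w s) ^ m s = t ^ Finsupp.weight w m := by
      simp only [← pow_mul, prod_pow_eq_pow_sum, Finsupp.weight_apply, Finsupp.sum, smul_eq_mul,
        mul_comm]
    simp only [div_pow, prod_div_distrib, hpow]
    rw [pow_sub₀ t ht (hn m hm)]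
    ring
  have F_eval_zero :
      F.eval 0 = eval (fun s => (u s).eval 0) (weightedHomogeneousComponent w n g) := by
    rw [F_eval, weightedHomogeneousComponent_apply, map_sum, sum_filter]
    refine sum_congr rfl fun m hm => ?_
    split_ifs with h
    · simp [h, eval_monomial, Finsupp.prod]
    · have := hn m hm
      simp [show n - Finsupp.weight w m ≠ 0 by lia]
  have F_eq_zero : F = 0 := by
    have F_eventually : ∀ᶠ t in cofinite, F.eval t = 0 := by
      filter_upwards [hg, eventually_cofinite_ne 0] with t hgt ht
      rw [F_eval_ne_zero ht, hgt, mul_zero]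
    exact F.eq_zero_of_infinite_isRoot (frequently_cofinite_iff_infinite.mp F_eventually.frequently)
  rw [← F_eval_zero, F_eq_zero, Polynomial.eval_zero]

end Degeneration

theorem eval_update_of_forall_support_eq_zero {τ A : Type*} [DecidableEq τ] [CommSemiring A]
    {f : MvPolynomial τ A} {s : τ} (hf : ∀ m ∈ f.support, m s = 0) (x : τ → A) (y : A) :
    eval (Function.update x s y) f = eval x f := by
  rw [eval_eq, eval_eq]
  refine sum_congr rfl fun m hm => congrArg _ (prod_congr rfl fun r hr => ?_)
  rw [Function.update_of_ne]
  rintro rfl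
  exact Finsupp.mem_support_iff.mp hr (hf m hm)

theorem mem_support_weightedHomogeneousComponent_single {τ A : Type*} [DecidableEq τ]
    [CommSemiring A] {f : MvPolynomial τ A} {s : τ} {n : ℕ} {m : τ →₀ ℕ} :
    m ∈ (weightedHomogeneousComponent (Pi.single s 1) n f).support ↔ m s = n ∧ m ∈ f.support := by
  rw [mem_support_iff, coeff_weightedHomogeneousComponent, Finsupp.weight_single_one_apply,
    ite_ne_right_iff, mem_support_iff]

section Staircase

variable {ι κ : Type*} [LinearOrder κ]

/-- The monomial with exponent `m` is divisible by the main diagonal term of a maximal minor of the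
submatrix with rows `S` and the columns up to `j`. Only the values of `σ` up to `j` matter. -/
def HasDiagonal [LinearOrder ι] (m : ι × κ →₀ ℕ) (S : Finset ι) (j : κ) : Prop :=
  ∃ σ : κ → ι, StrictMonoOn σ (Set.Iic j) ∧ ∀ l ≤ j, σ l ∈ S ∧ m (σ l, l) ≠ 0

section HasDiagonal

variable [LinearOrder ι] {m : ι × κ →₀ ℕ} {S T : Finset ι} {i : ι} {j k : κ}

theorem HasDiagonal.mono (hST : S ⊆ T) (h : HasDiagonal m S j) : HasDiagonal m T j :=
  h.imp fun _ hσ => ⟨hσ.1, fun l hl => (hσ.2 l hl).imp_left (hST ·)⟩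

theorem hasDiagonal_of_isMin (hj : IsMin j) (hi : i ∈ S) (hm : m (i, j) ≠ 0) :
    HasDiagonal m S j := by
  refine ⟨fun _ => i, fun a _ b hb hab => ?_, fun l hl => ?_⟩
  · exact absurd (hab.trans_le hb) hj.not_lt
  · rw [hj.eq_of_le hl]
    exact ⟨hi, hm⟩

theorem HasDiagonal.insert_of_covBy (hjk : j ⋖ k) (hi : ∀ a ∈ S, a < i) (hm : m (i, k) ≠ 0)
    (h : HasDiagonal m S j) : HasDiagonal m (insert i S) k := by
  obtain ⟨σ, hσ, hσm⟩ := h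
  refine ⟨Function.update σ k i, fun a _ b hb hab => ?_, fun l hl => ?_⟩
  · have hak : a < k := hab.trans_le hb
    rw [Function.update_of_ne hak.ne]
    rcases (Set.mem_Iic.mp hb).eq_or_lt with rfl | hbk
    · rw [Function.update_self]
      exact hi _ (hσm a (hjk.le_of_lt hak)).1
    · rw [Function.update_of_ne hbk.ne]
      exact hσ (hjk.le_of_lt hak) (hjk.le_of_lt hbk) hab
  · rcases hl.eq_or_lt with rfl | hlk
    · rw [Function.update_self]
      exact ⟨mem_insert_self i S, hm⟩
    · rw [Function.update_of_ne hlk.ne]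
      exact (hσm l (hjk.le_of_lt hlk)).imp_left (mem_insert_of_mem ·)

end HasDiagonal

variable [LocallyFiniteOrderBot κ]

/-- In the submatrix of `x` with rows `S`, column `j` is a linear combination of the columns before
it. -/
def IsColumnDependent {A : Type*} [CommSemiring A] (x : ι × κ → A) (S : Finset ι) (j : κ) : Prop :=
  ∃ μ : κ → A, ∀ i ∈ S, x (i, j) = ∑ l ∈ Iio j, μ l * x (i, l)

section IsColumnDependent

variable {S : Finset ι} {i : ι} {j k : κ}

theorem IsColumnDependent.exists_update_insert [DecidableEq ι] {A : Type*} [CommSemiring A]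
    {x : ι × κ → A} (h : IsColumnDependent x S j) (hi : i ∉ S) :
    ∃ y, IsColumnDependent (Function.update x (i, j) y) (insert i S) j := by
  obtain ⟨μ, hμ⟩ := h
  refine ⟨∑ l ∈ Iio j, μ l * x (i, l), μ, fun a ha => ?_⟩
  have hsum (y : A) : ∑ l ∈ Iio j, μ l * Function.update x (i, j) y (a, l) =
      ∑ l ∈ Iio j, μ l * x (a, l) := by
    refine sum_congr rfl fun l hl => ?_
    rw [Function.update_of_ne fun h => (mem_Iio.mp hl).ne (congrArg Prod.snd h)]
  rw [hsum]
  rcases mem_insert.mp ha with rfl | ha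
  · rw [Function.update_self]
  · rw [Function.update_of_ne fun h : (a, j) = (i, j) => hi ((Prod.mk.inj h).1 ▸ ha), hμ a ha]

theorem isColumnDependent_of_covBy {K : Type*} [Field K] {x : ι × κ → K} (hjk : j ⋖ k)
    {μ : κ → K} {c : K} (hc : c ≠ 0)
    (h : ∀ i ∈ S, x (i, j) = ∑ l ∈ Iio j, μ l * x (i, l) + c * x (i, k)) :
    IsColumnDependent x S k := by
  have hIio : Iio k = insert j (Iio j) := by
    ext l
    rw [mem_Iio, Iio_insert, mem_Iic, hjk.lt_iff_le_left]
  refine ⟨fun l => if l = j then c⁻¹ else -c⁻¹ * μ l, fun i hi => ?_⟩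
  have hsum : ∑ l ∈ Iio j, (if l = j then c⁻¹ else -c⁻¹ * μ l) * x (i, l) =
      -c⁻¹ * ∑ l ∈ Iio j, μ l * x (i, l) := by
    rw [mul_sum]
    refine sum_congr rfl fun l hl => ?_
    rw [if_neg (mem_Iio.mp hl).ne, mul_assoc]
  rw [hIio, sum_insert (by simp : j ∉ Iio j), hsum]
  beta_reduce
  rw [if_pos rfl, h i hi]
  field_simp
  ring

theorem IsColumnDependent.exists_curve [DecidableEq ι] {K : Type*} [Field K] {x : ι × κ → K}
    (h : IsColumnDependent x S j) (hjk : j ⋖ k) (hx : x (i, k) ≠ 0) :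
    ∃ u : ι × κ → Polynomial K, (∀ s, (u s).eval 0 = x s) ∧ ∀ᶠ t in cofinite,
      IsColumnDependent (fun s => (u s).eval t / t ^ (Pi.single (i, k) 1 : ι × κ → ℕ) s)
        (insert i S) k := by
  obtain ⟨μ, hμ⟩ := h
  let d := x (i, j) - ∑ l ∈ Iio j, μ l * x (i, l)
  let c : Polynomial K :=
    Polynomial.C (x (i, k))⁻¹ * (Polynomial.X * (Polynomial.X + Polynomial.C d))
  let δ (a : ι) : Polynomial K := if a = i then Polynomial.X else c * Polynomial.C (x (a, k))
  -- At time `t` the entry `(i, k)` is `x (i, k) / t`, and column `j` minus `∑ μ l * (column l)` is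
  -- `c t` times column `k`: row `i` dictates `c t`, the other rows the motion of column `j`. Moving
  -- `(i, j)` by `t` keeps `c t ≠ 0` for almost all `t` even if `d = 0`.
  refine ⟨fun s => Polynomial.C (x s) + if s.2 = j then δ s.1 else 0, fun s => ?_, ?_⟩
  · simp only [δ, c]
    split_ifs <;> simp
  filter_upwards [eventually_cofinite_ne 0, eventually_cofinite_ne (-d)] with t ht htd
  have htd : t + d ≠ 0 := fun h => htd (eq_neg_of_add_eq_zero_left h)
  have hc : c.eval t = (x (i, k))⁻¹ * (t * (t + d)) := by simp [c]
  have hc_ne : c.eval t ≠ 0 := hc ▸ mul_ne_zero (inv_ne_zero hx) (mul_ne_zero ht htd)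
  set y : ι × κ → K := fun s => (Polynomial.C (x s) + if s.2 = j then δ s.1 else 0).eval t /
    t ^ (Pi.single (i, k) 1 : ι × κ → ℕ) s with y_def
  have y_of_lt (a : ι) {l : κ} (hl : l < j) : y (a, l) = x (a, l) := by
    simp [y_def, hl.ne, (hl.trans hjk.lt).ne]
  have y_j_self : y (i, j) = x (i, j) + t := by simp [y_def, δ, hjk.lt.ne]
  have y_k_self : y (i, k) = x (i, k) / t := by simp [y_def, hjk.lt.ne']
  have y_j {a : ι} (ha : a ≠ i) : y (a, j) = x (a, j) + c.eval t * x (a, k) := by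
    simp [y_def, δ, ha]
  have y_k {a : ι} (ha : a ≠ i) : y (a, k) = x (a, k) := by simp [y_def, ha, hjk.lt.ne']
  refine isColumnDependent_of_covBy hjk (μ := μ) hc_ne fun a ha => ?_
  rw [sum_congr rfl fun l hl => by rw [y_of_lt a (mem_Iio.mp hl)]]
  by_cases hai : a = i
  · have hd : x (i, j) = ∑ l ∈ Iio j, μ l * x (i, l) + d := (add_sub_cancel _ _).symm
    rw [hai, y_j_self, y_k_self, hc, hd]
    field_simp
    ring
  · rw [y_j hai, y_k hai, hμ a (mem_of_mem_insert_of_ne ha hai)]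

end IsColumnDependent

variable {K : Type*} [Field K] [Infinite K] {g : MvPolynomial (ι × κ) K} {S : Finset ι} {i : ι}
  {j k : κ}

theorem eval_weightedHomogeneousComponent_single_eq_zero [DecidableEq ι] (hjk : j ⋖ k)
    {n : ℕ} (hn : n ≠ 0) (hgn : ∀ m ∈ g.support, m (i, k) ≤ n)
    (hg : ∀ x, IsColumnDependent x (insert i S) k → eval x g = 0)
    {x : ι × κ → K} (hx : IsColumnDependent x S j) :
    eval x (weightedHomogeneousComponent (Pi.single (i, k) 1) n g) = 0 := by
  by_cases hxik : x (i, k) = 0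
  · rw [eval_eq]
    refine sum_eq_zero fun m hm => ?_
    have hmik : m (i, k) = n := (mem_support_weightedHomogeneousComponent_single.mp hm).1
    have hmem : (i, k) ∈ m.support := Finsupp.mem_support_iff.mpr (hmik ▸ hn)
    rw [prod_eq_zero hmem (by rw [hxik, hmik, zero_pow hn]), mul_zero]
  · obtain ⟨u, hu, hdep⟩ := hx.exists_curve hjk hxik
    rw [← funext hu]
    refine eval_weightedHomogeneousComponent_eq_zero_of_eventually (fun m hm => ?_) u
      (hdep.mono fun t ht => hg _ ht)
    rw [Finsupp.weight_single_one_apply]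
    exact hgn m hm

theorem eq_zero_of_eval_eq_zero_of_not_hasDiagonal [LinearOrder ι] [PredOrder κ]
    (hstd : ∀ m ∈ g.support, ¬ HasDiagonal m S j)
    (hg : ∀ x, IsColumnDependent x S j → eval x g = 0) : g = 0 := by
  induction S using Finset.induction_on_max generalizing j g with
  | empty => exact MvPolynomial.funext fun x => by simpa using hg x ⟨0, by simp⟩
  | insert i S hi ih =>
    have hiS : i ∉ S := fun h => (hi i h).false
    have hgij : ∀ m ∈ g.support, m (i, j) = 0 := by
      by_contra! ⟨m₀, hm₀, hm₀ij⟩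
      have hj : ¬ IsMin j := fun hj =>
        hstd m₀ hm₀ (hasDiagonal_of_isMin hj (mem_insert_self i S) hm₀ij)
      have hpred := Order.pred_covBy_of_not_isMin hj
      obtain ⟨m, hm, hmax⟩ := exists_max_image g.support (fun m => m (i, j)) ⟨m₀, hm₀⟩
      have hn : m (i, j) ≠ 0 := ((Nat.pos_of_ne_zero hm₀ij).trans_le (hmax m₀ hm₀)).ne'
      have hzero : weightedHomogeneousComponent (Pi.single (i, j) 1) (m (i, j)) g = 0 := by
        refine ih (fun d hd hdiag => ?_) fun x hx =>
          eval_weightedHomogeneousComponent_single_eq_zero hpred hn hmax hg hx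
        obtain ⟨hdij, hdg⟩ := mem_support_weightedHomogeneousComponent_single.mp hd
        exact hstd d hdg (hdiag.insert_of_covBy hpred hi (hdij ▸ hn))
      have hm_top :=
        (mem_support_weightedHomogeneousComponent_single (s := (i, j))).mpr ⟨rfl, hm⟩
      rw [hzero, support_zero] at hm_top
      exact notMem_empty m hm_top
    refine ih (fun m hm h => hstd m hm (h.mono (subset_insert i S))) fun x hx => ?_
    obtain ⟨y, hy⟩ := hx.exists_update_insert hiS
    rw [← eval_update_of_forall_support_eq_zero hgij x y, hg _ hy]

end Staircase

section Parametrization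

variable {ι κ : Type*} [LinearOrder κ] [LocallyFiniteOrderBot κ]

theorem IsColumnDependent.det_submatrix_eq_zero {A : Type*} [CommRing A] [Fintype ι] [Fintype κ]
    {x : ι × κ → A} {j : κ} (h : IsColumnDependent x univ j) (σ : κ → ι) :
    (Matrix.of fun k l => x (σ k, l)).det = 0 := by
  obtain ⟨μ, hμ⟩ := h
  let B : Matrix κ κ A := Matrix.of fun k l => x (σ k, l)
  have hcol : (fun k => ∑ l, (if l < j then μ l else 0) • B k l) = fun k => B k j := by
    funext k
    have hIio : univ.filter (· < j) = Iio j := by ext; simp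
    simp only [smul_eq_mul, ite_mul, zero_mul, ← sum_filter, hIio]
    exact (hμ (σ k) (mem_univ _)).symm
  have hdet := B.det_updateCol_sum j fun l => if l < j then μ l else 0
  rwa [hcol, Matrix.updateCol_eq_self, if_neg (lt_irrefl j), zero_smul] at hdet

/-- The coordinates of the generic matrix whose column `j` is a linear combination of the columns
before it: the coefficients of the combination and the entries outside column `j` are independent
variables. -/
noncomputable def genericDependent (R : Type*) [CommSemiring R] (ι : Type*) (j : κ) :
    ι × κ → MvPolynomial ((ι × κ) ⊕ κ) R :=
  fun s => if s.2 = j then ∑ l ∈ Iio j, X (.inr l) * X (.inl (s.1, l)) else X (.inl s)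

theorem isColumnDependent_genericDependent (R : Type*) [CommSemiring R] (S : Finset ι) (j : κ) :
    IsColumnDependent (genericDependent R ι j) S j := by
  refine ⟨fun l => X (.inr l), fun i _ => ?_⟩
  rw [genericDependent, if_pos rfl]
  refine sum_congr rfl fun l hl => ?_
  rw [genericDependent, if_neg (mem_Iio.mp hl).ne]

theorem IsColumnDependent.aeval_eq_zero {R A : Type*} [CommSemiring R] [CommSemiring A]
    [Algebra R A] [Fintype ι] {j : κ} {x : ι × κ → A} (h : IsColumnDependent x univ j)
    {f : MvPolynomial (ι × κ) R} (hf : aeval (genericDependent R ι j) f = 0) :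
    aeval x f = 0 := by
  obtain ⟨μ, hμ⟩ := h
  have hcomp : (aeval (Sum.elim x μ)).comp (aeval (genericDependent R ι j)) = aeval (R := R) x := by
    refine algHom_ext fun ⟨i, l⟩ => ?_
    rw [AlgHom.comp_apply, aeval_X, aeval_X, genericDependent]
    split_ifs with hl
    · obtain rfl : l = j := hl
      simp [hμ i (mem_univ i)]
    · simp
  rw [← hcomp, AlgHom.comp_apply, hf, map_zero]

end Parametrization

theorem minorsIdeal_le_ker (R : Type*) [CommRing R] (p q : ℕ) (j : Fin q) :
    minorsIdeal R p q ≤ RingHom.ker (aeval (R := R) (genericDependent R (Fin p) j)) := by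
  refine Ideal.span_le.mpr ?_
  rintro _ ⟨σ, rfl⟩
  rw [SetLike.mem_coe, RingHom.mem_ker, AlgHom.map_det]
  convert (isColumnDependent_genericDependent R univ j).det_submatrix_eq_zero σ using 2
  ext k l
  simp

theorem eq_zero_of_aeval_genericDependent_eq_zero {R : Type*} [CommRing R] [IsDomain R] {p n : ℕ}
    {g : MvPolynomial (Fin p × Fin (n + 1)) R}
    (hstd : g ∈ restrictSupport R {m | ∀ σ : Fin (n + 1) → Fin p, StrictMono σ →
      ¬ diagonalExponent σ ≤ m})
    (hg : aeval (genericDependent R (Fin p) (Fin.last n)) g = 0) : g = 0 := by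
  let K := AlgebraicClosure (FractionRing R)
  have hinj : Function.Injective (algebraMap R K) := by
    rw [IsScalarTower.algebraMap_eq R (FractionRing R) K]
    exact (algebraMap (FractionRing R) K).injective.comp
      (IsFractionRing.injective R (FractionRing R))
  refine map_injective _ hinj ?_
  rw [map_zero]
  refine eq_zero_of_eval_eq_zero_of_not_hasDiagonal (S := univ) (j := Fin.last n) ?_ fun x hx => ?_
  · rintro m hm ⟨σ, hσ, hσm⟩
    refine hstd (support_map_subset _ g hm) σ (fun a b hab => ?_)
      (diagonalExponent_le fun l => (hσm l (Fin.le_last l)).2)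
    exact hσ (Fin.le_last a) (Fin.le_last b) hab
  · rw [eval_map, ← aeval_def]
    exact hx.aeval_eq_zero hg

theorem minorsIdeal_eq_ker (R : Type*) [CommRing R] [IsDomain R] (p n : ℕ) :
    minorsIdeal R p (n + 1) =
      RingHom.ker (aeval (R := R) (genericDependent R (Fin p) (Fin.last n))) := by
  refine le_antisymm (minorsIdeal_le_ker R p (n + 1) _) fun f hf => ?_
  have hf_top : f ∈ (⊤ : Submodule R _) := Submodule.mem_top
  rw [← minorsIdeal_sup_restrictSupport_eq_top] at hf_top
  obtain ⟨a, ha, g, hg, rfl⟩ := Submodule.mem_sup.mp hf_top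
  have ha_ker := minorsIdeal_le_ker R p (n + 1) (Fin.last n) ha
  have hg_ker := (Ideal.add_mem_iff_right _ ha_ker).mp hf
  rw [eq_zero_of_aeval_genericDependent_eq_zero hg hg_ker, add_zero]
  exact ha

theorem maximalMinorsIdeal_isPrime_general (R : Type*) [CommRing R] [IsDomain R] (p q : ℕ)
    (hq : 1 ≤ q) : (minorsIdeal R p q).IsPrime := by
  obtain ⟨n, rfl⟩ := Nat.exists_eq_add_of_le' hq
  rw [minorsIdeal_eq_ker]
  exact RingHom.ker_isPrime _

/-- For `p ≥ q ≥ 1`, the ideal of maximal minors of the generic `p × q`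
matrix is a prime ideal of `ℂ[x_{ij}]`. -/
theorem maximalMinorsIdeal_isPrime (p q : ℕ) (hq : 1 ≤ q) (hpq : q ≤ p) :
    (maximalMinorsIdeal p q).IsPrime :=
  maximalMinorsIdeal_isPrime_general ℂ p q hq
end

section
/- Let $p \geq q \geq 1$ be natural numbers. In the polynomial ring $R = \mathbb{C}[x_{ij} : 1 \leq i \leq p, 1 \leq j \leq q]$, let $I \subset R$ be the ideal generated by all $q \times q$ minors of the generic $p \times q$ matrix $X = (x_{ij})$. Then the Krull dimension of the quotient ring $R/I$ equals $pq - (p - q + 1)$. -/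
/-!
A point of the determinantal variety over a field `L ⊇ k` is an `m × n` matrix over `L` with a
nonzero kernel vector `v`. If `v j₀ ≠ 0`, then column `j₀` is a linear combination of the other
columns, so all entries lie in the algebra generated by `|m| (|n| - 1)` entries and `|n| - 1`
coefficients; this bounds the transcendence degree of every residue field from above. Conversely,
if all entries outside column `j₀` and `|n| - 1` entries in column `j₀` are independent
transcendentals, Cramer's rule gives the coefficients and the rest of column `j₀`, so the bound is
attained.
-/

universe u

section KrullDimension

theorem ringKrullDim_eq_of_isIntegral (R S : Type*) [CommRing R] [CommRing S] [Algebra R S]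
    [Algebra.IsIntegral R S] [FaithfulSMul R S] : ringKrullDim S = ringKrullDim R := by
  apply le_antisymm
  · exact Order.krullDim_le_of_strictMono (PrimeSpectrum.comap (algebraMap R S))
      fun P Q hPQ => Ideal.IsIntegral.comap_lt_comap (I := P.asIdeal) (J := Q.asIdeal) hPQ
  · refine iSup_le fun l => ?_
    obtain ⟨⟨P, hP, hPl⟩⟩ := (inferInstance : Nonempty (Ideal.primesOver l.head.asIdeal S))
    obtain ⟨l', hl', -⟩ := Ideal.exists_ltSeries_of_hasGoingUp (S := S) l P
    rw [← hl']
    exact le_iSup (fun l : LTSeries (PrimeSpectrum S) => ((l.length : ℕ∞) : WithBot ℕ∞)) l'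

theorem ringKrullDim_le_of_forall_isPrime {R : Type*} [CommRing R] {d : WithBot ℕ∞}
    (h : ∀ P : Ideal R, P.IsPrime → ringKrullDim (R ⧸ P) ≤ d) : ringKrullDim R ≤ d := by
  rw [ringKrullDim, Order.krullDim_eq_iSup_coheight]
  refine iSup_le fun P => ?_
  rw [Order.coheight_eq_krullDim_Ici]
  exact (ringKrullDim_quotient P.asIdeal).symm.trans_le (h P.asIdeal P.isPrime)

variable (k : Type*) {A : Type*} [Field k] [CommRing A] [Algebra k A] [Algebra.FiniteType k A]

theorem ringKrullDim_eq_toENat_trdeg [IsDomain A] :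
    ringKrullDim A = (Cardinal.toENat (Algebra.trdeg k A) : WithBot ℕ∞) := by
  obtain ⟨s, g, hg, hgi⟩ := exists_integral_inj_algHom_of_fg k A
  algebraize [g.toRingHom]
  have : IsScalarTower k (MvPolynomial (Fin s) k) A :=
    IsScalarTower.of_algebraMap_eq fun r => (g.commutes r).symm
  have : Algebra.IsIntegral (MvPolynomial (Fin s) k) A := ⟨hgi⟩
  have : FaithfulSMul (MvPolynomial (Fin s) k) A :=
    (faithfulSMul_iff_algebraMap_injective _ _).2 hg
  have h_trdeg : Algebra.trdeg k A = s := by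
    have h_add := lift_trdeg_add_eq k (MvPolynomial (Fin s) k) (A := A)
    rw [trdeg_eq_zero (R := MvPolynomial (Fin s) k)] at h_add
    simpa using h_add.symm
  rw [h_trdeg, ringKrullDim_eq_of_isIntegral (MvPolynomial (Fin s) k) A]
  simp

variable {k}

theorem toENat_trdeg_range_le_ringKrullDim {B : Type*} [CommRing B] [IsDomain B] [Algebra k B]
    (f : A →ₐ[k] B) :
    (Cardinal.toENat (Algebra.trdeg k f.range) : WithBot ℕ∞) ≤ ringKrullDim A := by
  have : Algebra.FiniteType k f.range := .of_surjective f.rangeRestrict f.rangeRestrict_surjective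
  rw [← ringKrullDim_eq_toENat_trdeg]
  exact ringKrullDim_le_of_surjective f.rangeRestrict.toRingHom f.rangeRestrict_surjective

end KrullDimension

theorem ringKrullDim_le_of_forall_trdeg_range_le {k : Type*} {A : Type u} [Field k] [CommRing A]
    [Algebra k A] [Algebra.FiniteType k A] {d : ℕ}
    (h : ∀ (L : Type u) [Field L] [Algebra k L] (f : A →ₐ[k] L), Algebra.trdeg k f.range ≤ d) :
    ringKrullDim A ≤ d := by
  refine ringKrullDim_le_of_forall_isPrime fun P _ => ?_
  let ι := IsScalarTower.toAlgHom k (A ⧸ P) (FractionRing (A ⧸ P))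
  let f := ι.comp (Ideal.Quotient.mkₐ k P)
  have h_mem (a : A ⧸ P) : ι a ∈ f.range := by
    obtain ⟨a, rfl⟩ := Ideal.Quotient.mk_surjective a
    exact ⟨a, rfl⟩
  have h_inj : Function.Injective (ι.codRestrict f.range h_mem) :=
    (AlgHom.injective_codRestrict _ _ _).2 (IsFractionRing.injective _ _)
  have h_trdeg := (trdeg_le_of_injective _ h_inj).trans (h _ f)
  rw [ringKrullDim_eq_toENat_trdeg k]
  exact_mod_cast Cardinal.toENat_le_natCast.2 h_trdeg

section TranscendenceDegree

variable {k A ι : Type*} [CommRing k] [CommRing A] [Algebra k A] [Fintype ι]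
  {x : ι → A} {S : Subalgebra k A}

theorem trdeg_le_card_of_le_adjoin [IsDomain k] (h : S ≤ Algebra.adjoin k (Set.range x)) :
    Algebra.trdeg k S ≤ Fintype.card ι := by
  refine (trdeg_le_of_injective (Subalgebra.inclusion h)
    (Subalgebra.inclusion_injective h)).trans ?_
  rw [Algebra.adjoin_range_eq_range_aeval]
  have := lift_trdeg_le_of_surjective _ (MvPolynomial.aeval (R := k) x).rangeRestrict_surjective
  simpa using this

theorem card_le_trdeg_of_algebraicIndependent [Nontrivial k] (hx : AlgebraicIndependent k x)
    (h : ∀ i, x i ∈ S) : (Fintype.card ι : Cardinal) ≤ Algebra.trdeg k S := by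
  have hy : AlgebraicIndependent k fun i => (⟨x i, h i⟩ : S) := .of_comp S.val hx
  simpa using hy.lift_cardinalMk_le_trdeg

theorem det_ne_zero_of_algebraicIndependent [Nontrivial k] [DecidableEq ι] {M : Matrix ι ι A}
    (hM : AlgebraicIndependent k fun t : ι × ι => M t.1 t.2) : M.det ≠ 0 := by
  have h_det : MvPolynomial.aeval (fun t : ι × ι => M t.1 t.2) (Matrix.mvPolynomialX ι ι k).det =
      M.det := by
    rw [AlgHom.map_det, AlgHom.mapMatrix_apply]
    exact congrArg Matrix.det (Matrix.mvPolynomialX_mapMatrix_aeval k M)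
  rw [← h_det, Ne, map_eq_zero_iff _ hM]
  exact Matrix.det_mvPolynomialX_ne_zero ι k

end TranscendenceDegree

theorem range_comp_quotientMkₐ {k A B : Type*} [CommSemiring k] [CommRing A] [Semiring B]
    [Algebra k A] [Algebra k B] (I : Ideal A) (f : A ⧸ I →ₐ[k] B) :
    (f.comp (Ideal.Quotient.mkₐ k I)).range = f.range := by
  rw [AlgHom.range_comp, (AlgHom.range_eq_top _).2 (Ideal.Quotient.mkₐ_surjective k I),
    Algebra.map_top]

theorem card_prod_ne_sum_ne {m n : Type*} [Fintype m] [Fintype n] [DecidableEq n] (j₀ : n) :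
    Fintype.card (m × {j // j ≠ j₀} ⊕ {j // j ≠ j₀}) =
      (Fintype.card m + 1) * (Fintype.card n - 1) := by
  simp [add_mul]

section MaximalMinors

variable {m n : Type*} [Fintype n] [DecidableEq n]

/-- The ideal generated by the maximal minors of an `m × n` matrix. They are indexed by
injections `n ↪ m`, so each minor occurs, up to sign, once for every ordering of its rows. -/
def idealOfMaximalMinors {R : Type*} [CommRing R] (M : Matrix m n R) : Ideal R :=
  Ideal.span (Set.range fun σ : n ↪ m => (M.submatrix σ id).det)

theorem idealOfMaximalMinors_eq_bot_iff_forall_det_eq_zero {R : Type*} [CommRing R]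
    {M : Matrix m n R} :
    idealOfMaximalMinors M = ⊥ ↔ ∀ σ : n ↪ m, (M.submatrix σ id).det = 0 := by
  simp only [idealOfMaximalMinors, Ideal.span_eq_bot, Set.forall_mem_range]

theorem map_idealOfMaximalMinors {R S : Type*} [CommRing R] [CommRing S] (f : R →+* S)
    (M : Matrix m n R) : (idealOfMaximalMinors M).map f = idealOfMaximalMinors (M.map f) := by
  simp only [idealOfMaximalMinors, Ideal.map_span, ← Set.range_comp, Function.comp_def,
    RingHom.map_det, RingHom.mapMatrix_apply, Matrix.submatrix_map]

variable [Finite m] {K : Type*} [Field K] {M : Matrix m n K}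

theorem exists_det_submatrix_ne_zero_iff_linearIndependent_col :
    (∃ σ : n ↪ m, (M.submatrix σ id).det ≠ 0) ↔ LinearIndependent K M.col := by
  refine ⟨fun ⟨σ, hσ⟩ => ?_, fun hM => ?_⟩
  · exact (Matrix.linearIndependent_cols_of_det_ne_zero hσ).of_comp (LinearMap.funLeft K K σ)
  · have : Fintype m := Fintype.ofFinite m
    obtain ⟨κ, a, ha, h_span, h_indep⟩ := exists_linearIndependent' K M.row
    have h_rank : M.rank = Fintype.card n := by
      rw [← Matrix.rank_transpose]
      exact hM.rank_matrix
    have : Finite κ := Finite.of_injective a ha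
    have : Fintype κ := Fintype.ofFinite κ
    have h_card : Fintype.card n = Fintype.card κ := by
      rw [← h_rank, Matrix.rank_eq_finrank_span_row, ← h_span, finrank_span_eq_card h_indep]
    let e := Fintype.equivOfCardEq h_card
    refine ⟨e.toEmbedding.trans ⟨a, ha⟩, ?_⟩
    rw [← isUnit_iff_ne_zero, ← Matrix.isUnit_iff_isUnit_det,
      ← Matrix.linearIndependent_rows_iff_isUnit]
    exact h_indep.comp e e.injective

theorem idealOfMaximalMinors_eq_bot_iff_exists_col_eq_sum :
    idealOfMaximalMinors M = ⊥ ↔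
      ∃ (j₀ : n) (c : {j // j ≠ j₀} → K), ∀ i, M i j₀ = ∑ j : {j // j ≠ j₀}, M i j * c j := by
  have h_minors : idealOfMaximalMinors M = ⊥ ↔ ¬ LinearIndependent K M.col := by
    rw [idealOfMaximalMinors_eq_bot_iff_forall_det_eq_zero,
      ← exists_det_submatrix_ne_zero_iff_linearIndependent_col]
    push Not
    rfl
  have h_mem_span (j₀ : n) : M.col j₀ ∈ Submodule.span K (M.col '' (Set.univ \ {j₀})) ↔
      ∃ c : {j // j ≠ j₀} → K, ∀ i, M i j₀ = ∑ j : {j // j ≠ j₀}, M i j * c j := by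
    rw [← Set.compl_eq_univ_sdiff, Set.image_eq_range, Submodule.mem_span_range_iff_exists_fun]
    refine exists_congr fun c => ?_
    simp only [funext_iff, Finset.sum_apply, Pi.smul_apply, smul_eq_mul, mul_comm (c _), eq_comm]
    rfl
  simp only [h_minors, linearIndependent_iff_notMem_span, not_forall, not_not, h_mem_span]

theorem exists_matrix_idealOfMaximalMinors_eq_bot {j₀ : n} {Y : Matrix m {j // j ≠ j₀} K}
    {e : {j // j ≠ j₀} → m} (hY : (Y.submatrix e id).det ≠ 0) (b : {j // j ≠ j₀} → K) :
    ∃ M : Matrix m n K, idealOfMaximalMinors M = ⊥ ∧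
      (∀ i (j : {j // j ≠ j₀}), M i j = Y i j) ∧ ∀ j, M (e j) j₀ = b j := by
  let c := (Y.submatrix e id)⁻¹.mulVec b
  let M : Matrix m n K := Matrix.of fun i j => if h : j = j₀ then Y.mulVec c i else Y i ⟨j, h⟩
  have h_ne (i : m) (j : {j // j ≠ j₀}) : M i j = Y i j := dif_neg j.2
  have h_eq (i : m) : M i j₀ = Y.mulVec c i := dif_pos rfl
  have h_solve : (Y.submatrix e id).mulVec c = b := by
    rw [Matrix.mulVec_mulVec, Matrix.mul_nonsing_inv _ hY.isUnit, Matrix.one_mulVec]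
  refine ⟨M, idealOfMaximalMinors_eq_bot_iff_exists_col_eq_sum.2 ⟨j₀, c, fun i => ?_⟩, h_ne,
    fun j => (h_eq (e j)).trans (congrFun h_solve j)⟩
  simp only [h_eq, h_ne]
  rfl

end MaximalMinors

section EntryAlgebra

variable {m n A : Type*} (k : Type*) [CommRing k] [CommRing A] [Algebra k A]

/-- The `k`-algebra generated by the entries of `M`, which is the coordinate ring of the Zariski
closure over `k` of the point `M`. -/
def entryAlgebra (M : Matrix m n A) : Subalgebra k A :=
  Algebra.adjoin k (Set.range fun t : m × n => M t.1 t.2)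

variable {k} {M : Matrix m n A}

theorem apply_mem_entryAlgebra (i : m) (j : n) : M i j ∈ entryAlgebra k M :=
  Algebra.subset_adjoin ⟨(i, j), rfl⟩

theorem entryAlgebra_eq_range_aeval :
    entryAlgebra k M = (MvPolynomial.aeval fun t : m × n => M t.1 t.2).range :=
  Algebra.adjoin_range_eq_range_aeval k _

variable [Fintype n] [DecidableEq n]

theorem idealOfMaximalMinors_mvPolynomialX_le_ker_aeval_iff :
    idealOfMaximalMinors (Matrix.mvPolynomialX m n k) ≤
        RingHom.ker (MvPolynomial.aeval fun t : m × n => M t.1 t.2) ↔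
      idealOfMaximalMinors M = ⊥ := by
  rw [← RingHom.ker_coe_toRingHom, ← Ideal.map_eq_bot_iff_le_ker, map_idealOfMaximalMinors]
  exact iff_of_eq (congrArg (idealOfMaximalMinors · = ⊥) (Matrix.mvPolynomialX_map_eval₂ _ M))

end EntryAlgebra

section DeterminantalVariety

variable {m n k K : Type*} [Field k] [Field K] [Algebra k K] {M : Matrix m n K}
  [Fintype n] [DecidableEq n]

theorem trdeg_entryAlgebra_le [Fintype m] (hM : idealOfMaximalMinors M = ⊥) :
    Algebra.trdeg k (entryAlgebra k M) ≤ ((Fintype.card m + 1) * (Fintype.card n - 1) : ℕ) := by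
  obtain ⟨j₀, c, hc⟩ := idealOfMaximalMinors_eq_bot_iff_exists_col_eq_sum.1 hM
  let x : m × {j // j ≠ j₀} ⊕ {j // j ≠ j₀} → K := Sum.elim (fun t => M t.1 t.2) c
  have h_entry (i : m) (j : {j // j ≠ j₀}) : M i j ∈ Algebra.adjoin k (Set.range x) :=
    Algebra.subset_adjoin ⟨.inl (i, j), rfl⟩
  have h_coeff (j : {j // j ≠ j₀}) : c j ∈ Algebra.adjoin k (Set.range x) :=
    Algebra.subset_adjoin ⟨.inr j, rfl⟩
  have h_le : entryAlgebra k M ≤ Algebra.adjoin k (Set.range x) := by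
    rw [entryAlgebra, Algebra.adjoin_le_iff]
    rintro _ ⟨⟨i, j⟩, rfl⟩
    by_cases hj : j = j₀
    · subst hj
      simp only [hc]
      exact sum_mem fun j _ => mul_mem (h_entry i j) (h_coeff j)
    · exact h_entry i ⟨j, hj⟩
  exact (trdeg_le_card_of_le_adjoin h_le).trans_eq (by rw [card_prod_ne_sum_ne])

theorem exists_matrix_forall_mem_entryAlgebra [Finite m] {j₀ : n}
    {x : m × {j // j ≠ j₀} ⊕ {j // j ≠ j₀} → K} (hx : AlgebraicIndependent k x)
    (e : {j // j ≠ j₀} ↪ m) :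
    ∃ M : Matrix m n K, idealOfMaximalMinors M = ⊥ ∧ ∀ t, x t ∈ entryAlgebra k M := by
  let φ (t : {j // j ≠ j₀} × {j // j ≠ j₀}) : m × {j // j ≠ j₀} ⊕ {j // j ≠ j₀} :=
    .inl (e t.1, t.2)
  have hφ : Function.Injective φ :=
    Sum.inl_injective.comp (e.injective.prodMap Function.injective_id)
  let Y : Matrix m {j // j ≠ j₀} K := Matrix.of fun i j => x (.inl (i, j))
  have hY : (Y.submatrix e id).det ≠ 0 := det_ne_zero_of_algebraicIndependent (hx.comp φ hφ)
  obtain ⟨M, hM, h_ne, h_eq⟩ := exists_matrix_idealOfMaximalMinors_eq_bot hY fun j => x (.inr j)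
  refine ⟨M, hM, ?_⟩
  rintro (⟨i, j⟩ | j)
  · rw [show x (.inl (i, j)) = M i j from (h_ne i j).symm]
    exact apply_mem_entryAlgebra i j.1
  · rw [← h_eq j]
    exact apply_mem_entryAlgebra (e j) j₀

theorem ringKrullDim_quotient_idealOfMaximalMinors_le [Fintype m] :
    ringKrullDim (MvPolynomial (m × n) k ⧸ idealOfMaximalMinors (Matrix.mvPolynomialX m n k)) ≤
      ((Fintype.card m + 1) * (Fintype.card n - 1) : ℕ) := by
  refine ringKrullDim_le_of_forall_trdeg_range_le (k := k) fun L _ _ f => ?_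
  let F := f.comp (Ideal.Quotient.mkₐ k _)
  let M : Matrix m n L := Matrix.of fun i j => F (.X (i, j))
  have hF : F = MvPolynomial.aeval fun t : m × n => M t.1 t.2 := MvPolynomial.aeval_unique F
  have hM : idealOfMaximalMinors M = ⊥ := by
    rw [← idealOfMaximalMinors_mvPolynomialX_le_ker_aeval_iff (k := k), ← hF]
    intro y hy
    change f (Ideal.Quotient.mk _ y) = 0
    rw [Ideal.Quotient.eq_zero_iff_mem.2 hy, map_zero]
  have h_range : f.range = entryAlgebra k M := by
    rw [entryAlgebra_eq_range_aeval, ← hF, range_comp_quotientMkₐ]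
  rw [h_range]
  exact trdeg_entryAlgebra_le hM

theorem toENat_trdeg_entryAlgebra_le_ringKrullDim [Finite m]
    (hM : idealOfMaximalMinors M = ⊥) :
    (Cardinal.toENat (Algebra.trdeg k (entryAlgebra k M)) : WithBot ℕ∞) ≤
      ringKrullDim
        (MvPolynomial (m × n) k ⧸ idealOfMaximalMinors (Matrix.mvPolynomialX m n k)) := by
  have h_ker := (idealOfMaximalMinors_mvPolynomialX_le_ker_aeval_iff (k := k)).2 hM
  let f := Ideal.Quotient.liftₐ (idealOfMaximalMinors (Matrix.mvPolynomialX m n k))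
    (MvPolynomial.aeval fun t : m × n => M t.1 t.2) fun _ ha => h_ker ha
  have h_range : f.range = entryAlgebra k M := by
    rw [entryAlgebra_eq_range_aeval, ← range_comp_quotientMkₐ]
    exact congrArg AlgHom.range (Ideal.Quotient.liftₐ_comp _ _ _)
  rw [← h_range]
  exact toENat_trdeg_range_le_ringKrullDim f

end DeterminantalVariety

section

variable (m n k : Type*) [Fintype m] [Fintype n] [DecidableEq n] [Field k]

theorem le_ringKrullDim_quotient_idealOfMaximalMinors [Nonempty n]
    (h : Fintype.card n ≤ Fintype.card m + 1) :
    ((Fintype.card m + 1) * (Fintype.card n - 1) : ℕ) ≤ ringKrullDim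
      (MvPolynomial (m × n) k ⧸ idealOfMaximalMinors (Matrix.mvPolynomialX m n k)) := by
  obtain ⟨j₀⟩ := ‹Nonempty n›
  have h_card : Fintype.card {j // j ≠ j₀} ≤ Fintype.card m := by simpa using h
  obtain ⟨e⟩ := Function.Embedding.nonempty_of_card_le h_card
  let T := m × {j // j ≠ j₀} ⊕ {j // j ≠ j₀}
  let L := FractionRing (MvPolynomial T k)
  have hx : AlgebraicIndependent k
      (IsScalarTower.toAlgHom k (MvPolynomial T k) L ∘ MvPolynomial.X) :=
    (MvPolynomial.algebraicIndependent_X T k).map' (IsFractionRing.injective _ L)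
  obtain ⟨M, hM, hxM⟩ := exists_matrix_forall_mem_entryAlgebra hx e
  have h_trdeg := card_le_trdeg_of_algebraicIndependent hx hxM
  rw [card_prod_ne_sum_ne] at h_trdeg
  exact (WithBot.coe_le_coe.2 (Cardinal.natCast_le_toENat.2 h_trdeg)).trans
    (toENat_trdeg_entryAlgebra_le_ringKrullDim hM)

theorem maximalMinorsIdeal_krullDim_general [Nonempty n]
    (h : Fintype.card n ≤ Fintype.card m + 1) :
    ringKrullDim
        (MvPolynomial (m × n) k ⧸ idealOfMaximalMinors (Matrix.mvPolynomialX m n k)) =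
      (Fintype.card m * Fintype.card n - (Fintype.card m + 1 - Fintype.card n) : ℕ) := by
  have h_arith : Fintype.card m * Fintype.card n - (Fintype.card m + 1 - Fintype.card n) =
      (Fintype.card m + 1) * (Fintype.card n - 1) := by
    obtain ⟨c, hc⟩ := Nat.exists_eq_add_one.2 (Fintype.card_pos (α := n))
    rw [hc] at h ⊢
    refine Nat.sub_eq_of_eq_add ?_
    rw [Nat.add_sub_cancel]
    zify [h]
    ring
  rw [h_arith]
  exact ringKrullDim_quotient_idealOfMaximalMinors_le.antisymm
    (le_ringKrullDim_quotient_idealOfMaximalMinors m n k h)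

end

/-- For `p ≥ q ≥ 1`, the Krull dimension of the quotient of `ℂ[x_{ij}]`
by the ideal of maximal minors of the generic `p × q` matrix is `pq - (p - q + 1)`. -/
theorem maximalMinorsIdeal_krullDim (p q : ℕ) (hq : 1 ≤ q) (hpq : q ≤ p) :
    ringKrullDim (MvPolynomial (Fin p × Fin q) ℂ ⧸ maximalMinorsIdeal p q) =
      ((p * q - (p - q + 1) : ℕ) : WithBot (WithTop ℕ)) := by
  have : Nonempty (Fin q) := ⟨⟨0, hq⟩⟩
  rw [← Nat.sub_add_comm hpq]
  have h := maximalMinorsIdeal_krullDim_general (Fin p) (Fin q) ℂ (by simpa using hpq.step)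
  simp only [Fintype.card_fin] at h
  exact h
end

section
/- Let $p \geq q \geq 1$ be natural numbers. In the polynomial ring $R = \mathbb{C}[x_{ij} : 1 \leq i \leq p, 1 \leq j \leq q]$, let $I \subset R$ be the ideal generated by all $q \times q$ minors of the generic $p \times q$ matrix $X = (x_{ij})$, and let $\mathfrak{m} = (x_{ij})$ be the maximal ideal of polynomials vanishing at the origin. Then the localization of $R/I$ at the maximal ideal $\mathfrak{m}/I$ is a Cohen–Macaulay local ring. -/
/-- A commutative ring is a Cohen–Macaulay local ring if it is a Noetherian local ring
possessing a regular sequence of non-units (i.e. of elements of the maximal ideal)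
whose length equals the Krull dimension of the ring. -/
def IsCohenMacaulayLocalRing (A : Type*) [CommRing A] : Prop :=
  IsLocalRing A ∧ IsNoetherianRing A ∧
    ∃ rs : List A, (∀ r ∈ rs, r ∈ nonunits A) ∧
      RingTheory.Sequence.IsRegular A rs ∧
      ((rs.length : ℕ) : WithBot (WithTop ℕ)) = ringKrullDim A

/-- The image in `R/I` of the maximal ideal `(x_{ij})` of polynomials vanishing
at the origin, where `I` is the ideal of maximal minors of the generic matrix. -/
noncomputable def originIdealMod (p q : ℕ) :
    Ideal (MvPolynomial (Fin p × Fin q) ℂ ⧸ maximalMinorsIdeal p q) :=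
  (Ideal.span (Set.range (MvPolynomial.X : Fin p × Fin q → MvPolynomial (Fin p × Fin q) ℂ))).map
    (Ideal.Quotient.mk (maximalMinorsIdeal p q))

/-!
Depth is measured by the vanishing of `Ext` out of the residue field. Let `A` be a matrix over a
Cohen–Macaulay local ring `R` whose entries are part of a system of parameters, `I` its ideal of
maximal minors, `K ⊆ I` that of `A` without its first row, and `L ⊇ K` that of `A` without its first
row and first column. Modulo `K`, the minors of `A` through the first row are proportional to the
corresponding minors generating `L`, so `I / K ≅ L / K` once neither ideal has an annihilator in
`R / K`. The exact sequences `0 → L / K → R / K → R / L → 0` and `0 → I / K → R / K → R / I → 0`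
then bound the depth of `R / I` from below by induction on the number of rows. Annihilators are
excluded by the inductive depth of `R / K` and the dimensions of `R / I` and `R / L`, which are
bounded above by specializing the matrix to a Toeplitz matrix.
-/

universe u

section SupportDim

open Module

variable {R M : Type*} [CommRing R] [IsNoetherianRing R] [AddCommGroup M] [Module R M]
  [Module.Finite R M]

lemma supportDim_torsionBySet_le (J : Ideal R) :
    supportDim R (Submodule.torsionBySet R M J) ≤ ringKrullDim (R ⧸ J) := by
  have hJ : J ≤ annihilator R (Submodule.torsionBySet R M J) :=
    (Submodule.torsion_gc R M _ (OrderDual.toDual J)).mpr le_rfl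
  rw [supportDim_eq_ringKrullDim_quotient_annihilator]
  exact ringKrullDim_le_of_surjective (Ideal.Quotient.factor hJ)
    (Ideal.Quotient.factor_surjective hJ)

lemma exists_ge_saturated_supportDim_le {r : R} (hr : IsSMulRegular M r) (N : Submodule R M) :
    ∃ N' ≥ N, (∀ x, r • x ∈ N' → x ∈ N') ∧ supportDim R N' ≤ supportDim R N := by
  refine ⟨Submodule.torsionBySet R M (annihilator R N),
    (Submodule.torsion_gc R M N (OrderDual.toDual (annihilator R N))).mp le_rfl,
    fun x hx ↦ ?_, ?_⟩
  · rw [Submodule.mem_torsionBySet_iff] at hx ⊢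
    exact fun a ↦ hr.right_eq_zero_of_smul ((smul_comm r (a : R) x).trans (hx a))
  · rw [supportDim_eq_ringKrullDim_quotient_annihilator R N]
    exact supportDim_torsionBySet_le (annihilator R N)

end SupportDim

section Depth

open CategoryTheory Abelian IsLocalRing Module RingTheory.Sequence
open scoped Pointwise

variable {R : Type u} [CommRing R] [IsLocalRing R]
variable {M N P : Type u} [AddCommGroup M] [Module R M] [AddCommGroup N] [Module R N]
  [AddCommGroup P] [Module R P]

variable (R) in
/-- The module `M` over the local ring `R` with residue field `k` has depth at least `n`, encoded
as the vanishing of `Extⁱ(k, M)` for `i < n`; the zero module thus has infinite depth. -/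
def DepthGE (n : ℕ) (M : Type u) [AddCommGroup M] [Module R M] : Prop :=
  ∀ i < n, Subsingleton (Ext (ModuleCat.of R (R ⧸ maximalIdeal R)) (ModuleCat.of R M) i)

namespace DepthGE

lemma of_subsingleton [Subsingleton M] (n : ℕ) : DepthGE R n M := by
  intro i _
  have hM : Limits.IsZero (ModuleCat.of R M) := ModuleCat.isZero_of_subsingleton _
  refine subsingleton_of_forall_eq 0 fun x ↦ ?_
  rw [← Ext.comp_mk₀_id x, hM.eq_of_src (𝟙 _) 0, Ext.mk₀_zero, Ext.comp_zero]

lemma mono {m n : ℕ} (hmn : m ≤ n) (h : DepthGE R n M) : DepthGE R m M :=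
  fun i hi ↦ h i (hi.trans_le hmn)

variable {f : M →ₗ[R] N} {g : N →ₗ[R] P}

lemma of_exact_left {n : ℕ} (hf : Function.Injective f) (hfg : Function.Exact f g)
    (hg : Function.Surjective g) (hN : DepthGE R (n + 1) N) (hP : DepthGE R n P) :
    DepthGE R (n + 1) M := by
  intro i hi
  have hS := ModuleCat.shortComplex_shortExact
    (ModuleCat.shortComplexOfCompEqZero f g hfg.linearMap_comp_eq_zero) hfg hf hg
  refine subsingleton_of_forall_eq 0 fun x ↦ ?_
  cases i with
  | zero =>
    obtain ⟨φ, rfl⟩ := Ext.addEquiv₀.symm.surjective x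
    have := hS.mono_f
    exact Ext.postcomp_mk₀_injective_of_mono _ (ModuleCat.ofHom f) ((hN 0 hi).elim _ _)
  | succ i =>
    obtain ⟨y, rfl⟩ := Ext.covariant_sequence_exact₁ _ hS x ((hN _ hi).elim _ _) rfl
    rw [(hP i (Nat.lt_of_succ_lt_succ hi)).elim y 0, Ext.zero_comp]

lemma of_exact_right {n : ℕ} (hf : Function.Injective f) (hfg : Function.Exact f g)
    (hg : Function.Surjective g) (hM : DepthGE R (n + 1) M) (hN : DepthGE R n N) :
    DepthGE R n P := by
  intro i hi
  have hS := ModuleCat.shortComplex_shortExact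
    (ModuleCat.shortComplexOfCompEqZero f g hfg.linearMap_comp_eq_zero) hfg hf hg
  refine subsingleton_of_forall_eq 0 fun x ↦ ?_
  obtain ⟨y, rfl⟩ :=
    Ext.covariant_sequence_exact₃ _ hS x rfl ((hM (i + 1) (Nat.succ_lt_succ hi)).elim _ _)
  rw [(hN i hi).elim y 0, Ext.zero_comp]

lemma of_linearEquiv {n : ℕ} (e : M ≃ₗ[R] N) (h : DepthGE R n M) : DepthGE R n N := by
  intro i hi
  refine subsingleton_of_forall_eq 0 fun x ↦ ?_
  rw [← Ext.comp_mk₀_id x, ← e.toModuleIso.inv_hom_id, ← Ext.mk₀_comp_mk₀,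
    ← Ext.comp_assoc_of_second_deg_zero,
    (h i hi).elim (x.comp (Ext.mk₀ e.toModuleIso.inv) (add_zero i)) 0, Ext.zero_comp]

end DepthGE

lemma maximalIdeal_smul_top_lt_top [Module.Finite R M] [Nontrivial M] :
    maximalIdeal R • (⊤ : Submodule R M) < ⊤ :=
  lt_top_iff_ne_top.mpr fun h ↦ top_ne_bot <|
    Submodule.eq_bot_of_le_smul_of_le_jacobson_bot _ _ Module.Finite.fg_top h.ge
      (maximalIdeal_le_jacobson _)

lemma mem_maximalIdeal_of_isRegular {rs : List R} (h : IsRegular M rs) {r : R} (hr : r ∈ rs) :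
    r ∈ maximalIdeal R := by
  have hne : Ideal.ofList rs ≠ ⊤ := fun htop ↦ h.top_ne_smul (by rw [htop, Submodule.top_smul])
  exact le_maximalIdeal hne (Ideal.subset_span hr)

lemma support_residueField : support R (R ⧸ maximalIdeal R) =
    PrimeSpectrum.zeroLocus (maximalIdeal R) := by
  rw [support_eq_zeroLocus, Ideal.annihilator_quotient]

variable [IsNoetherianRing R] [Module.Finite R M]

lemma DepthGE.exists_isRegular [Nontrivial M] {n : ℕ} (h : DepthGE R n M) :
    ∃ rs : List R, rs.length = n ∧ (∀ r ∈ rs, r ∈ maximalIdeal R) ∧ IsRegular M rs :=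
  ModuleCat.exists_isRegular_of_exists_subsingleton_ext _ n (ModuleCat.of R M)
    maximalIdeal_smul_top_lt_top _ support_residueField h

lemma DepthGE.of_isRegular {rs : List R} (h : IsRegular M rs) : DepthGE R rs.length M :=
  have := h.nontrivial
  ModuleCat.subsingleton_ext_of_exists_isRegular _ _ support_residueField.subset
    (ModuleCat.of R M) maximalIdeal_smul_top_lt_top rs
    (fun _ ↦ mem_maximalIdeal_of_isRegular h) h

lemma exists_submodule_quotSMulTop_supportDim_succ_le {r : R} (hr : IsSMulRegular M r)
    (hrm : r ∈ maximalIdeal R) {N : Submodule R M} (hN : N ≠ ⊥) :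
    ∃ P : Submodule R (QuotSMulTop r M), P ≠ ⊥ ∧ supportDim R P + 1 ≤ supportDim R N := by
  obtain ⟨N', hNN', hsat, hdim⟩ := exists_ge_saturated_supportDim_le hr N
  let φ := QuotSMulTop.map r N'.subtype
  refine ⟨LinearMap.range φ, fun hφ ↦ ne_bot_of_le_ne_bot hN hNN' ?_, ?_⟩
  · have hle : N' ≤ Ideal.span {r} • N' := by
      intro x hx
      have hx0 : φ (Submodule.Quotient.mk ⟨x, hx⟩) = 0 :=
        LinearMap.congr_fun (LinearMap.range_eq_bot.mp hφ) _
      obtain ⟨y, -, rfl⟩ := (Submodule.Quotient.mk_eq_zero _).mp hx0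
      rw [Submodule.ideal_span_singleton_smul]
      exact Submodule.smul_mem_pointwise_smul y r N' (hsat y hx)
    exact Submodule.eq_bot_of_le_smul_of_le_jacobson_bot _ N' (IsNoetherian.noetherian N') hle
      ((Ideal.span_singleton_le_iff_mem _).mpr hrm |>.trans (maximalIdeal_le_jacobson _))
  · calc supportDim R (LinearMap.range φ) + 1
        ≤ supportDim R (QuotSMulTop r N') + 1 := by
          gcongr
          exact supportDim_le_of_surjective φ.rangeRestrict φ.surjective_rangeRestrict
      _ = supportDim R N' := supportDim_quotSMulTop_succ_eq_supportDim (hr.submodule N' r) hrm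
      _ ≤ supportDim R N := hdim

lemma length_le_supportDim_of_isWeaklyRegular {rs : List R} (hrs : ∀ r ∈ rs, r ∈ maximalIdeal R)
    (h : IsWeaklyRegular M rs) {N : Submodule R M} (hN : N ≠ ⊥) :
    (rs.length : WithBot ℕ∞) ≤ supportDim R N := by
  induction rs generalizing M with
  | nil =>
    have := Submodule.nontrivial_iff_ne_bot.mpr hN
    have := (nonempty_support_of_nontrivial (R := R) (M := N)).to_subtype
    exact Order.krullDim_nonneg
  | cons r rs ih =>
    obtain ⟨hr, h⟩ := isWeaklyRegular_cons_iff M r rs |>.mp h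
    rw [List.forall_mem_cons] at hrs
    obtain ⟨P, hP, hdim⟩ := exists_submodule_quotSMulTop_supportDim_succ_le hr hrs.1 hN
    push_cast [List.length_cons]
    grw [ih hrs.2 h hP, hdim]

lemma DepthGE.torsionBySet_eq_bot {n : ℕ} (h : DepthGE R (n + 1) M) {J : Ideal R}
    (hJ : ringKrullDim (R ⧸ J) ≤ n) : Submodule.torsionBySet R M J = ⊥ := by
  by_contra hne
  have : Nontrivial M := (Submodule.nontrivial_iff R).mp (nontrivial_of_ne _ _ hne)
  obtain ⟨rs, hlen, hrs, hreg⟩ := h.exists_isRegular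
  have hle : ((n + 1 : ℕ) : WithBot ℕ∞) ≤ n :=
    calc ((n + 1 : ℕ) : WithBot ℕ∞)
        = rs.length := by rw [hlen]
      _ ≤ supportDim R (Submodule.torsionBySet R M J) :=
          length_le_supportDim_of_isWeaklyRegular hrs hreg.toIsWeaklyRegular hne
      _ ≤ ringKrullDim (R ⧸ J) := supportDim_torsionBySet_le J
      _ ≤ n := hJ
  exact absurd (Nat.cast_le.mp hle) (Nat.not_succ_le_self n)

end Depth

section Step

open IsLocalRing

lemma ker_linearCombination_le_of_mul_comm {C ι : Type*} [CommRing C] {f g : ι → C}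
    (hfg : ∀ i j, f i * g j = f j * g i) (hf : ∀ c, (∀ i, c * f i = 0) → c = 0) :
    LinearMap.ker (Finsupp.linearCombination C f) ≤
      LinearMap.ker (Finsupp.linearCombination C g) := by
  intro x hx
  rw [LinearMap.mem_ker, Finsupp.linearCombination_apply] at hx ⊢
  refine hf _ fun i ↦ ?_
  calc (x.sum fun j a ↦ a • g j) * f i
      = (x.sum fun j a ↦ a • f j) * g i := by
        simp only [Finsupp.sum, Finset.sum_mul, smul_eq_mul, mul_assoc]
        exact Finset.sum_congr rfl fun j _ ↦ by rw [hfg j i, mul_comm (g j)]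
    _ = 0 := by rw [hx, zero_mul]

lemma nonempty_span_range_equiv_of_mul_comm {C ι : Type*} [CommRing C] {f g : ι → C}
    (hfg : ∀ i j, f i * g j = f j * g i) (hf : ∀ c, (∀ i, c * f i = 0) → c = 0)
    (hg : ∀ c, (∀ i, c * g i = 0) → c = 0) :
    Nonempty (Ideal.span (Set.range f) ≃ₗ[C] Ideal.span (Set.range g)) := by
  have hker : LinearMap.ker (Finsupp.linearCombination C f) =
      LinearMap.ker (Finsupp.linearCombination C g) :=
    (ker_linearCombination_le_of_mul_comm hfg hf).antisymm
      (ker_linearCombination_le_of_mul_comm (fun i j ↦ by rw [mul_comm, hfg j i, mul_comm]) hg)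
  rw [Ideal.span, Ideal.span, ← Finsupp.range_linearCombination, ← Finsupp.range_linearCombination]
  exact ⟨(LinearMap.quotKerEquivRange _).symm ≪≫ₗ Submodule.quotEquivOfEq _ _ hker ≪≫ₗ
    LinearMap.quotKerEquivRange _⟩

lemma nonempty_quotQuot_span_equiv_quot_sup {R ι : Type*} [CommRing R] (K : Ideal R) (f : ι → R) :
    Nonempty (((R ⧸ K) ⧸ Ideal.span (Set.range fun i ↦ Ideal.Quotient.mk K (f i))) ≃ₗ[R]
      R ⧸ (K ⊔ Ideal.span (Set.range f))) := by
  have h : (Ideal.span (Set.range f)).map (Ideal.Quotient.mkₐ R K) =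
      Ideal.span (Set.range fun i ↦ Ideal.Quotient.mk K (f i)) := by
    rw [Ideal.map_span, ← Set.range_comp]
    rfl
  rw [← h]
  exact ⟨(DoubleQuot.quotQuotEquivQuotSupₐ R K (Ideal.span (Set.range f))).toLinearEquiv⟩

variable {R : Type u} [CommRing R] [IsLocalRing R]

section Algebra

variable {S : Type u} [CommRing S] [Algebra R S] {n : ℕ}

lemma DepthGE.ideal (I : Ideal S) (hS : DepthGE R (n + 1) S) (hI : DepthGE R n (S ⧸ I)) :
    DepthGE R (n + 1) I :=
  .of_exact_left (f := I.subtype.restrictScalars R) (g := (Submodule.mkQ I).restrictScalars R)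
    I.subtype_injective (LinearMap.exact_subtype_mkQ I) (Submodule.mkQ_surjective I) hS hI

lemma DepthGE.quotient (I : Ideal S) (hI : DepthGE R (n + 1) I) (hS : DepthGE R n S) :
    DepthGE R n (S ⧸ I) :=
  .of_exact_right (f := I.subtype.restrictScalars R) (g := (Submodule.mkQ I).restrictScalars R)
    I.subtype_injective (LinearMap.exact_subtype_mkQ I) (Submodule.mkQ_surjective I) hI hS

end Algebra

variable [IsNoetherianRing R] {ι : Type*} {n : ℕ} {K : Ideal R} {f g : ι → R}

lemma DepthGE.eq_zero_of_forall_mul_eq_zero (hK : DepthGE R (n + 1) (R ⧸ K))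
    (hdim : ringKrullDim (R ⧸ (K ⊔ Ideal.span (Set.range f))) ≤ n) (c : R ⧸ K)
    (hc : ∀ i, c * Ideal.Quotient.mk K (f i) = 0) : c = 0 := by
  have hle : K ⊔ Ideal.span (Set.range f) ≤ Ideal.torsionOf R (R ⧸ K) c := by
    refine sup_le (fun k hk ↦ ?_) (Ideal.span_le.mpr (Set.range_subset_iff.mpr fun i ↦ ?_))
    · rw [Ideal.mem_torsionOf_iff, Algebra.smul_def, Ideal.Quotient.algebraMap_eq,
        Ideal.Quotient.eq_zero_iff_mem.mpr hk, zero_mul]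
    · rw [SetLike.mem_coe, Ideal.mem_torsionOf_iff, Algebra.smul_def, mul_comm]
      exact hc i
  have hmem : c ∈ Submodule.torsionBySet R (R ⧸ K) (K ⊔ Ideal.span (Set.range f) : Ideal R) :=
    (Submodule.mem_torsionBySet_iff _ _).mpr fun a ↦ hle a.2
  rwa [hK.torsionBySet_eq_bot hdim, Submodule.mem_bot] at hmem

/- Modulo `K` the ideals `(f)` and `(g)` are isomorphic modules, so they have the same depth. -/
lemma DepthGE.quotient_sup_span (hfg : ∀ i j, f i * g j - f j * g i ∈ K)
    (hK : DepthGE R (n + 1) (R ⧸ K))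
    (hg : DepthGE R n (R ⧸ (K ⊔ Ideal.span (Set.range g))))
    (hgdim : ringKrullDim (R ⧸ (K ⊔ Ideal.span (Set.range g))) ≤ n)
    (hfdim : ringKrullDim (R ⧸ (K ⊔ Ideal.span (Set.range f))) ≤ n) :
    DepthGE R n (R ⧸ (K ⊔ Ideal.span (Set.range f))) := by
  obtain ⟨e⟩ := nonempty_span_range_equiv_of_mul_comm
    (f := fun i ↦ Ideal.Quotient.mk K (f i)) (g := fun i ↦ Ideal.Quotient.mk K (g i))
    (fun i j ↦ by simpa only [map_mul] using Ideal.Quotient.eq.mpr (hfg i j))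
    (hK.eq_zero_of_forall_mul_eq_zero hfdim) (hK.eq_zero_of_forall_mul_eq_zero hgdim)
  obtain ⟨ef⟩ := nonempty_quotQuot_span_equiv_quot_sup K f
  obtain ⟨eg⟩ := nonempty_quotQuot_span_equiv_quot_sup K g
  have hspan : DepthGE R (n + 1) (Ideal.span (Set.range fun i ↦ Ideal.Quotient.mk K (g i))) :=
    .ideal _ hK (hg.of_linearEquiv eg.symm)
  exact .of_linearEquiv ef <|
    .quotient _ (hspan.of_linearEquiv (e.symm.restrictScalars R)) (hK.mono n.le_succ)

end Step

section CohenMacaulay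

open IsLocalRing RingTheory.Sequence

lemma IsCohenMacaulayLocalRing.of_ringEquiv {A B : Type*} [CommRing A] [CommRing B] (e : A ≃+* B)
    (h : IsCohenMacaulayLocalRing A) : IsCohenMacaulayLocalRing B := by
  obtain ⟨hloc, hnoeth, rs, hrs, hreg, hlen⟩ := h
  refine ⟨e.isLocalRing, isNoetherianRing_of_ringEquiv A e, rs.map e, ?_, ?_, ?_⟩
  · exact List.forall_mem_map.mpr fun r hr ↦ (map_mem_nonunits_iff e r).mpr (hrs r hr)
  · exact (AddEquiv.isRegular_congr (e := e.toAddEquiv) <| List.forall₂_map_right_iff.mpr <|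
      List.forall₂_same.mpr fun r _ x ↦ map_mul e r x).mp hreg
  · rw [List.length_map, hlen, ringKrullDim_eq_of_ringEquiv e]

variable {R : Type u} [CommRing R] [IsLocalRing R] [IsNoetherianRing R]

lemma DepthGE.isCohenMacaulayLocalRing_quotient {n : ℕ} {J : Ideal R} (hJ : J ≠ ⊤)
    (hdepth : DepthGE R n (R ⧸ J)) (hdim : ringKrullDim (R ⧸ J) ≤ n) :
    IsCohenMacaulayLocalRing (R ⧸ J) := by
  have : Nontrivial (R ⧸ J) := Ideal.Quotient.nontrivial_iff.mpr hJ
  have hloc : IsLocalRing (R ⧸ J) := .of_surjective' _ Ideal.Quotient.mk_surjective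
  have : IsLocalHom (algebraMap R (R ⧸ J)) := .of_surjective _ Ideal.Quotient.mk_surjective
  obtain ⟨rs, rfl, hrs, hreg⟩ := hdepth.exists_isRegular
  have hrs' : ∀ r ∈ rs.map (algebraMap R (R ⧸ J)), r ∈ maximalIdeal (R ⧸ J) :=
    List.forall_mem_map.mpr fun r hr ↦ map_nonunit _ r (hrs r hr)
  have hreg' : IsRegular (R ⧸ J) (rs.map (algebraMap R (R ⧸ J))) := by
    rw [isRegular_iff_isWeaklyRegular_of_subset_maximalIdeal hrs',
      isWeaklyRegular_map_algebraMap_iff]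
    exact hreg.toIsWeaklyRegular
  refine ⟨hloc, inferInstance, _, hrs', hreg', le_antisymm ?_ ?_⟩
  · calc ((rs.map (algebraMap R (R ⧸ J))).length : WithBot ℕ∞)
        = rs.length := by rw [List.length_map]
      _ ≤ Module.supportDim R (⊤ : Submodule R (R ⧸ J)) :=
          length_le_supportDim_of_isWeaklyRegular hrs hreg.toIsWeaklyRegular top_ne_bot
      _ ≤ Module.supportDim R (R ⧸ J) :=
          Module.supportDim_le_of_injective _ (Submodule.injective_subtype ⊤)
      _ = ringKrullDim (R ⧸ J) := Module.supportDim_quotient_eq_ringKrullDim J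
  · rwa [List.length_map]

end CohenMacaulay

section MaximalMinors

open Matrix

/-- The ideal generated by the maximal minors of a matrix with at least as many rows as columns.
The minors are indexed by embeddings of the columns into the rows, so each of them occurs, up to
sign, once for every ordering of its rows; with fewer rows than columns the ideal is `⊥`. -/
def maximalMinors {R m n : Type*} [CommRing R] [Fintype n] [DecidableEq n] (A : Matrix m n R) :
    Ideal R :=
  Ideal.span (Set.range fun σ : n ↪ m ↦ (A.submatrix σ id).det)

section General

variable {R m n : Type*} [CommRing R] [Fintype n] [DecidableEq n] (A : Matrix m n R)

lemma det_submatrix_mem_maximalMinors (σ : n → m) :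
    (A.submatrix σ id).det ∈ maximalMinors A := by
  by_cases hσ : Function.Injective σ
  · exact Ideal.subset_span ⟨⟨σ, hσ⟩, rfl⟩
  · obtain ⟨i, j, hij, hne⟩ := Function.not_injective_iff.mp hσ
    rw [det_zero_of_row_eq hne (funext fun k ↦ congrArg (A · k) hij)]
    exact zero_mem _

lemma maximalMinors_submatrix_rows_le {l : Type*} (ρ : l → m) :
    maximalMinors (A.submatrix ρ id) ≤ maximalMinors A :=
  Ideal.span_le.mpr <| Set.range_subset_iff.mpr fun σ ↦
    det_submatrix_mem_maximalMinors A (ρ ∘ σ)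

lemma maximalMinors_eq_bot_of_card_lt [Fintype m] (h : Fintype.card m < Fintype.card n) :
    maximalMinors A = ⊥ := by
  have : IsEmpty (n ↪ m) := Function.Embedding.isEmpty_of_card_lt h
  rw [maximalMinors, Set.range_eq_empty, Ideal.span_empty]

lemma maximalMinors_eq_top_of_isEmpty [IsEmpty n] : maximalMinors A = ⊤ :=
  (Ideal.eq_top_iff_one _).mpr <| by
    simpa only [det_isEmpty] using det_submatrix_mem_maximalMinors A isEmptyElim

lemma maximalMinors_map {S : Type*} [CommRing S] (φ : R →+* S) :
    maximalMinors (A.map φ) = (maximalMinors A).map φ := by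
  rw [maximalMinors, maximalMinors, Ideal.map_span, ← Set.range_comp]
  congr! 3 with σ
  rw [Function.comp_apply, RingHom.map_det]
  rfl

lemma maximalMinors_le_of_forall_mem [Nonempty n] {I : Ideal R} (hA : ∀ i j, A i j ∈ I) :
    maximalMinors A ≤ I := by
  refine Ideal.span_le.mpr <| Set.range_subset_iff.mpr fun σ ↦ ?_
  rw [SetLike.mem_coe, det_apply]
  exact sum_mem fun π _ ↦ Submodule.smul_of_tower_mem I _ <|
    I.prod_mem (Finset.mem_univ (Classical.arbitrary n)) (hA _ _)

end General

variable {R m : Type*} [CommRing R] {a b : ℕ}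

lemma maximalMinors_le_submatrix_succ (A : Matrix m (Fin (b + 1)) R) :
    maximalMinors A ≤ maximalMinors (A.submatrix id Fin.succ) := by
  refine Ideal.span_le.mpr <| Set.range_subset_iff.mpr fun σ ↦ ?_
  rw [SetLike.mem_coe, det_succ_column_zero]
  exact sum_mem fun i _ ↦ Ideal.mul_mem_left _ _ <|
    det_submatrix_mem_maximalMinors (A.submatrix id Fin.succ) (σ ∘ i.succAbove)

lemma sum_mul_cofactor_eq_det (A : Matrix m (Fin (b + 1)) R) (i : m) (τ : Fin b → m) :
    ∑ j, A i j * ((-1) ^ (j : ℕ) * (A.submatrix τ j.succAbove).det) =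
      (A.submatrix (Fin.cons i τ : Fin (b + 1) → m) id).det := by
  rw [det_succ_row_zero]
  refine Finset.sum_congr rfl fun j _ ↦ ?_
  rw [← mul_assoc, mul_comm (A i j)]
  rfl

/-- The maximal minor of `A` on its first row and the rows `τ`, the latter numbered in the matrix
obtained by deleting the first row. These are the generators of `maximalMinors A` that do not come
from that smaller matrix. -/
def firstRowMinor (A : Matrix (Fin (a + 1)) (Fin (b + 1)) R) (τ : Fin b → Fin a) : R :=
  (A.submatrix (Fin.cons 0 (Fin.succ ∘ τ) : Fin (b + 1) → Fin (a + 1)) id).det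

/- With `c` the cofactors of the rows `τ` and `M` the matrix of the rows `0, υ`, all entries of
`M *ᵥ c` but the first lie in the ideal; compare `det M • c = adjugate M *ᵥ (M *ᵥ c)` at `0`. -/
lemma firstRowMinor_mul_det_sub_mem (A : Matrix (Fin (a + 1)) (Fin (b + 1)) R)
    (τ υ : Fin b → Fin a) :
    firstRowMinor A τ * ((A.submatrix Fin.succ Fin.succ).submatrix υ id).det -
      firstRowMinor A υ * ((A.submatrix Fin.succ Fin.succ).submatrix τ id).det ∈
      maximalMinors (A.submatrix Fin.succ id) := by
  let M := A.submatrix (Fin.cons 0 (Fin.succ ∘ υ) : Fin (b + 1) → Fin (a + 1)) id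
  let c : Fin (b + 1) → R := fun j ↦
    (-1) ^ (j : ℕ) * (A.submatrix (Fin.succ ∘ τ) j.succAbove).det
  have hc₀ : c 0 = ((A.submatrix Fin.succ Fin.succ).submatrix τ id).det := by
    simp only [c, Fin.val_zero, pow_zero, one_mul]
    rfl
  have hadj₀ : M.adjugate 0 0 = ((A.submatrix Fin.succ Fin.succ).submatrix υ id).det := by
    rw [adjugate_fin_succ_eq_det_submatrix]
    simp only [Fin.val_zero, add_zero, pow_zero, one_mul]
    rfl
  have hMc₀ : (M *ᵥ c) 0 = firstRowMinor A τ :=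
    sum_mul_cofactor_eq_det A 0 (Fin.succ ∘ τ)
  have hMc : ∀ k : Fin b, (M *ᵥ c) k.succ ∈ maximalMinors (A.submatrix Fin.succ id) := by
    intro k
    have hk : (M *ᵥ c) k.succ =
        ((A.submatrix Fin.succ id).submatrix (Fin.cons (υ k) τ : Fin (b + 1) → Fin a) id).det := by
      rw [submatrix_submatrix, Fin.comp_cons]
      exact sum_mul_cofactor_eq_det A (υ k).succ (Fin.succ ∘ τ)
    exact hk ▸ det_submatrix_mem_maximalMinors _ _
  have hcramer : M.det * c 0 =
      M.adjugate 0 0 * (M *ᵥ c) 0 + ∑ k : Fin b, M.adjugate 0 k.succ * (M *ᵥ c) k.succ := by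
    rw [← Fin.sum_univ_succ fun k ↦ M.adjugate 0 k * (M *ᵥ c) k]
    change _ = (M.adjugate *ᵥ (M *ᵥ c)) 0
    rw [mulVec_mulVec, adjugate_mul, smul_mulVec, one_mulVec, Pi.smul_apply, smul_eq_mul]
  change _ - M.det * _ ∈ _
  rw [← hc₀, ← hadj₀, ← hMc₀, hcramer, mul_comm, sub_add_cancel_left]
  exact neg_mem (sum_mem fun k _ ↦ Ideal.mul_mem_left _ _ (hMc k))

lemma exists_eq_cons_succ_comp_of_apply_zero {σ : Fin (b + 1) ↪ Fin (a + 1)} (hσ : σ 0 = 0) :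
    ∃ τ : Fin b ↪ Fin a, ⇑σ = Fin.cons 0 (Fin.succ ∘ τ) := by
  have hne (i : Fin b) : σ i.succ ≠ 0 := fun h ↦ i.succ_ne_zero (σ.injective (h.trans hσ.symm))
  choose τ hτ using fun i ↦ Fin.exists_succ_eq.mpr (hne i)
  refine ⟨⟨τ, fun i j hij ↦ ?_⟩, ?_⟩
  · exact Fin.succ_injective _ (σ.injective (by rw [← hτ i, ← hτ j, hij]))
  · funext i
    cases i using Fin.cases with
    | zero => exact hσ
    | succ i => exact (hτ i).symm

lemma maximalMinors_eq_sup_span (A : Matrix (Fin (a + 1)) (Fin (b + 1)) R) :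
    maximalMinors A = maximalMinors (A.submatrix Fin.succ id) ⊔
      Ideal.span (Set.range fun τ : Fin b ↪ Fin a ↦ firstRowMinor A τ) := by
  apply le_antisymm
  · refine Ideal.span_le.mpr <| Set.range_subset_iff.mpr fun σ ↦ ?_
    by_cases h0 : ∃ i, σ i = 0
    · obtain ⟨i, hi⟩ := h0
      let π := Equiv.swap i 0
      obtain ⟨τ, hτ⟩ := exists_eq_cons_succ_comp_of_apply_zero (σ := π.toEmbedding.trans σ)
        (by simp [π, hi])
      have hdet : firstRowMinor A τ = Equiv.Perm.sign π * (A.submatrix σ id).det := by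
        rw [firstRowMinor, ← hτ, ← det_permute]
        rfl
      have hsign : IsUnit ((Equiv.Perm.sign π : ℤ) : R) :=
        (Equiv.Perm.sign π).isUnit.map (Int.castRingHom R)
      rw [SetLike.mem_coe, ← Ideal.unit_mul_mem_iff_mem _ hsign, ← hdet]
      exact Ideal.mem_sup_right (Ideal.subset_span ⟨τ, rfl⟩)
    · push Not at h0
      choose τ hτ using fun i ↦ Fin.exists_succ_eq.mpr (h0 i)
      have hσ : ⇑σ = Fin.succ ∘ τ := funext fun i ↦ (hτ i).symm
      rw [hσ]
      exact Ideal.mem_sup_left (det_submatrix_mem_maximalMinors (A.submatrix Fin.succ id) τ)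
  · exact sup_le (maximalMinors_submatrix_rows_le A _) <| Ideal.span_le.mpr <|
      Set.range_subset_iff.mpr fun τ ↦ det_submatrix_mem_maximalMinors A _

end MaximalMinors

section SystemOfParameters

open IsLocalRing

lemma ringKrullDim_quotient_le_of_le_radical {R : Type*} [CommRing R] {I J : Ideal R}
    (h : J ≤ I.radical) : ringKrullDim (R ⧸ I) ≤ ringKrullDim (R ⧸ J) := by
  have hsub : PrimeSpectrum.zeroLocus (I : Set R) ⊆ PrimeSpectrum.zeroLocus (J : Set R) := by
    rw [← PrimeSpectrum.zeroLocus_radical I]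
    exact PrimeSpectrum.zeroLocus_anti_mono h
  rw [ringKrullDim_quotient, ringKrullDim_quotient]
  exact Order.krullDim_le_of_strictMono (Set.inclusion hsub) fun _ _ hlt ↦ hlt

variable {R : Type*} [CommRing R] [IsLocalRing R]

/-- The family `x` is part of a system of parameters of the local ring `R`: it lies in the
maximal ideal, and dividing it out lowers the dimension by (at least) its number of elements. -/
def IsPartialSOP {ι : Type*} [Fintype ι] (x : ι → R) : Prop :=
  (∀ i, x i ∈ maximalIdeal R) ∧
    ringKrullDim (R ⧸ Ideal.span (Set.range x)) + Fintype.card ι ≤ ringKrullDim R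

variable [IsNoetherianRing R]

lemma ringKrullDim_quotient_le_add_card (J : Ideal R) {s : Finset R}
    (hs : ∀ x ∈ s, x ∈ maximalIdeal R) :
    ringKrullDim (R ⧸ J) ≤ ringKrullDim (R ⧸ (J ⊔ Ideal.span s)) + s.card := by
  classical
  rcases eq_or_ne J ⊤ with rfl | hJ
  · have : Subsingleton (R ⧸ (⊤ : Ideal R)) := Ideal.Quotient.subsingleton_iff.mpr rfl
    rw [ringKrullDim_eq_bot_of_subsingleton]
    exact bot_le
  have : Nontrivial (R ⧸ J) := Ideal.Quotient.nontrivial_iff.mpr hJ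
  have : IsLocalRing (R ⧸ J) := .of_surjective' _ Ideal.Quotient.mk_surjective
  have : IsLocalHom (Ideal.Quotient.mk J) := .of_surjective _ Ideal.Quotient.mk_surjective
  have hspan : Ideal.span (s.image (Ideal.Quotient.mk J) : Set (R ⧸ J)) =
      (Ideal.span s).map (Ideal.Quotient.mk J) := by
    rw [Ideal.map_span, Finset.coe_image]
  calc ringKrullDim (R ⧸ J)
      ≤ ringKrullDim ((R ⧸ J) ⧸ Ideal.span (s.image (Ideal.Quotient.mk J) : Set (R ⧸ J))) +
          (s.image (Ideal.Quotient.mk J)).card := by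
        refine ringKrullDim_le_ringKrullDim_quotient_add_card _ ?_
        rw [ringJacobson_eq_maximalIdeal, Finset.coe_image, Set.image_subset_iff]
        exact fun x hx ↦ map_nonunit _ x (hs x hx)
    _ ≤ ringKrullDim (R ⧸ (J ⊔ Ideal.span s)) + s.card := by
        rw [hspan, ringKrullDim_eq_of_ringEquiv (DoubleQuot.quotQuotEquivQuotSup J _)]
        gcongr
        exact Finset.card_image_le

variable {ι κ : Type*} [Fintype ι] [Fintype κ]

lemma ringKrullDim_quotient_add_card_le (J : Ideal R) {x : ι → R}
    (hx : ∀ i, x i ∈ maximalIdeal R) (e : κ ↪ ι) (he : ∀ k, x (e k) ∈ J) :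
    ringKrullDim (R ⧸ J) + Fintype.card κ ≤
      ringKrullDim (R ⧸ (J ⊔ Ideal.span (Set.range x))) + Fintype.card ι := by
  classical
  let t : Finset ι := Finset.univ \ Finset.univ.map e
  have ht : (t.image x).card + Fintype.card κ ≤ Fintype.card ι := by
    calc (t.image x).card + Fintype.card κ
        ≤ t.card + (Finset.univ.map e).card := by
          grw [Finset.card_image_le, Finset.card_map, Finset.card_univ]
      _ = Fintype.card ι := Finset.card_sdiff_add_card_eq_card (Finset.subset_univ _)
  have hspan : J ⊔ Ideal.span (t.image x : Finset R) = J ⊔ Ideal.span (Set.range x) := by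
    refine le_antisymm (sup_le_sup_left (Ideal.span_mono (by simp)) J)
      (sup_le le_sup_left (Ideal.span_le.mpr (Set.range_subset_iff.mpr fun i ↦ ?_)))
    by_cases hi : i ∈ Finset.univ.map e
    · obtain ⟨k, -, rfl⟩ := Finset.mem_map.mp hi
      exact Ideal.mem_sup_left (he k)
    · exact Ideal.mem_sup_right <| Ideal.subset_span <| Finset.mem_image_of_mem x <|
        Finset.mem_sdiff.mpr ⟨Finset.mem_univ i, hi⟩
  have hmem : ∀ r ∈ t.image x, r ∈ maximalIdeal R := Finset.forall_mem_image.mpr fun i _ ↦ hx i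
  grw [ringKrullDim_quotient_le_add_card J hmem, hspan, add_assoc, ← Nat.cast_add, ht]

lemma IsPartialSOP.comp_embedding {x : ι → R} (hx : IsPartialSOP x) (e : κ ↪ ι) :
    IsPartialSOP (x ∘ e) := by
  refine ⟨fun k ↦ hx.1 (e k), ?_⟩
  have hsup : Ideal.span (Set.range (x ∘ e)) ⊔ Ideal.span (Set.range x) =
      Ideal.span (Set.range x) :=
    sup_eq_right.mpr (Ideal.span_mono (Set.range_comp_subset_range e x))
  have hle := ringKrullDim_quotient_add_card_le (Ideal.span (Set.range (x ∘ e))) hx.1 e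
    fun k ↦ Ideal.subset_span ⟨k, rfl⟩
  exact (hsup ▸ hle).trans hx.2

end SystemOfParameters

section Toeplitz

open IsLocalRing Matrix

/-- The `a × b` lower triangular Toeplitz matrix whose first column is `t 0, t 1, …`; such matrices
serve as specializations of an arbitrary matrix. The sequence `t` is indexed by `ℕ` rather than
`Fin a` to avoid bounds in the index `i - j`. -/
def toeplitz {R : Type*} [Zero R] (a b : ℕ) (t : ℕ → R) : Matrix (Fin a) (Fin b) R :=
  .of fun i j ↦ if (j : ℕ) ≤ i then t (i - j) else 0

lemma toeplitz_apply_mem {R : Type*} [CommRing R] {a b : ℕ} {t : ℕ → R} {I : Ideal R}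
    (ht : ∀ k, t k ∈ I) (i : Fin a) (j : Fin b) : toeplitz a b t i j ∈ I := by
  rw [toeplitz, of_apply]
  split_ifs
  · exact ht _
  · exact zero_mem _

lemma eq_zero_of_maximalMinors_toeplitz_eq_bot {D : Type*} [CommRing D] [IsDomain D] {a b : ℕ}
    {t : ℕ → D} (h : maximalMinors (toeplitz a b t) = ⊥) {k : ℕ} (hk : k + b ≤ a) : t k = 0 := by
  induction k using Nat.strong_induction_on with
  | h k ih =>
    let ρ : Fin b → Fin a := fun j ↦ ⟨k + j, by lia⟩
    have htri : ((toeplitz a b t).submatrix ρ id).IsLowerTriangular := by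
      intro i j hij
      have hij' : (i : ℕ) < j := hij
      simp only [toeplitz, ρ, submatrix_apply, of_apply, id]
      split_ifs
      · exact ih _ (by lia) (by lia)
      · rfl
    have hdet : ((toeplitz a b t).submatrix ρ id).det = t k ^ b := by
      rw [det_of_isLowerTriangular _ htri]
      simp [toeplitz, ρ]
    refine eq_zero_of_pow_eq_zero (n := b) ?_
    rw [← hdet, ← Ideal.mem_bot, ← h]
    exact det_submatrix_mem_maximalMinors _ _

lemma mem_of_maximalMinors_le_of_sub_toeplitz_mem {R : Type*} [CommRing R] {a b : ℕ}
    {A : Matrix (Fin a) (Fin b) R} {t : ℕ → R} (ht : ∀ k, a < k + b → t k = 0) {P : Ideal R}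
    [P.IsPrime] (hminors : maximalMinors A ≤ P) (hA : ∀ i j, A i j - toeplitz a b t i j ∈ P)
    (i : Fin a) (j : Fin b) : A i j ∈ P := by
  let φ := Ideal.Quotient.mk P
  have hφA : A.map φ = toeplitz a b (φ ∘ t) := by
    ext i j
    rw [map_apply, Ideal.Quotient.eq.mpr (hA i j), toeplitz, toeplitz, of_apply, of_apply,
      apply_ite φ, map_zero]
    rfl
  have hbot : maximalMinors (toeplitz a b (φ ∘ t)) = ⊥ := by
    rwa [← hφA, maximalMinors_map, Ideal.map_eq_bot_iff_le_ker, Ideal.mk_ker]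
  have hφt : φ ∘ t = 0 := by
    funext k
    rcases le_or_gt (k + b) a with hk | hk
    · exact eq_zero_of_maximalMinors_toeplitz_eq_bot hbot hk
    · simp [ht k hk]
  rw [← Ideal.Quotient.eq_zero_iff_mem, ← map_apply (M := A) (f := φ), hφA, hφt]
  simp [toeplitz]

lemma span_le_radical_maximalMinors_sup_span_sub_toeplitz {R : Type*} [CommRing R] {a b : ℕ}
    (A : Matrix (Fin a) (Fin b) R) {t : ℕ → R} (ht : ∀ k, a < k + b → t k = 0) :
    Ideal.span (Set.range fun ij : Fin a × Fin b ↦ A ij.1 ij.2) ≤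
      (maximalMinors A ⊔ Ideal.span (Set.range fun ij : Fin a × Fin b ↦
        (A - toeplitz a b t) ij.1 ij.2)).radical := by
  rw [Ideal.radical_eq_sInf, le_sInf_iff]
  rintro P ⟨hP, hprime⟩
  rw [sup_le_iff, Ideal.span_le, Set.range_subset_iff] at hP
  exact Ideal.span_le.mpr <| Set.range_subset_iff.mpr fun ij ↦
    mem_of_maximalMinors_le_of_sub_toeplitz_mem ht hP.1 (fun i j ↦ hP.2 (i, j)) ij.1 ij.2

/- Cut `A` down to a lower triangular Toeplitz matrix whose first column has only `a - b + 1`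
nonzero entries: in a domain, such a matrix with vanishing maximal minors is zero. -/
lemma IsPartialSOP.ringKrullDim_quotient_maximalMinors_add_le {R : Type*} [CommRing R]
    [IsLocalRing R] [IsNoetherianRing R] {a b : ℕ} {A : Matrix (Fin a) (Fin b) R}
    (hA : IsPartialSOP fun ij : Fin a × Fin b ↦ A ij.1 ij.2) :
    ringKrullDim (R ⧸ maximalMinors A) + (a + 1 - b : ℕ) ≤ ringKrullDim R := by
  rcases Nat.eq_zero_or_pos b with rfl | hb
  · rw [maximalMinors_eq_top_of_isEmpty]
    have : Subsingleton (R ⧸ (⊤ : Ideal R)) := Ideal.Quotient.subsingleton_iff.mpr rfl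
    rw [ringKrullDim_eq_bot_of_subsingleton, WithBot.bot_add]
    exact bot_le
  let t : ℕ → R := fun k ↦ if hk : k + b ≤ a then A ⟨k, by lia⟩ ⟨0, hb⟩ else 0
  have ht : ∀ k, a < k + b → t k = 0 := fun k hk ↦ dif_neg hk.not_ge
  have htmem : ∀ k, t k ∈ maximalIdeal R := by
    intro k
    simp only [t]
    split_ifs
    · exact hA.1 (_, _)
    · exact zero_mem _
  have hmem : ∀ ij : Fin a × Fin b, (A - toeplitz a b t) ij.1 ij.2 ∈ maximalIdeal R :=
    fun ij ↦ sub_mem (hA.1 ij) (toeplitz_apply_mem htmem _ _)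
  let e : Fin (a + 1 - b) ↪ Fin a × Fin b :=
    ⟨fun k ↦ (⟨k, by lia⟩, ⟨0, hb⟩), fun k l hkl ↦ by simpa [Fin.ext_iff] using hkl⟩
  have he : ∀ k, (A - toeplitz a b t) (e k).1 (e k).2 ∈ maximalMinors A := by
    intro k
    have hk : (k : ℕ) + b ≤ a := by lia
    have hzero : (A - toeplitz a b t) ⟨k, by lia⟩ ⟨0, hb⟩ = 0 := by simp [toeplitz, t, hk]
    exact hzero ▸ zero_mem (maximalMinors A)
  have hdim := ringKrullDim_quotient_add_card_le (maximalMinors A) hmem e he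
  grw [ringKrullDim_quotient_le_of_le_radical
    (span_le_radical_maximalMinors_sup_span_sub_toeplitz A ht), hA.2, Fintype.card_fin] at hdim
  exact hdim

end Toeplitz

section Determinantal

open IsLocalRing

variable {R : Type u} [CommRing R] [IsLocalRing R] {a b n : ℕ} {A : Matrix (Fin a) (Fin b) R}

section Depth

lemma DepthGE.quotient_maximalMinors_of_eq_zero_or_lt (h : b = 0 ∨ a < b) (hR : DepthGE R n R) :
    DepthGE R n (R ⧸ maximalMinors A) := by
  rcases h with rfl | hab
  · have : Subsingleton (R ⧸ maximalMinors A) :=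
      Ideal.Quotient.subsingleton_iff.mpr (maximalMinors_eq_top_of_isEmpty A)
    exact .of_subsingleton n
  · rw [maximalMinors_eq_bot_of_card_lt A (by simpa using hab)]
    exact hR.of_linearEquiv (Submodule.quotEquivOfEqBot ⊥ rfl).symm

variable [IsNoetherianRing R]

lemma IsPartialSOP.ringKrullDim_quotient_maximalMinors_le
    (hA : IsPartialSOP fun ij : Fin a × Fin b ↦ A ij.1 ij.2)
    (hR : ringKrullDim R ≤ (n + (a + 1 - b) : ℕ)) : ringKrullDim (R ⧸ maximalMinors A) ≤ n := by
  have h := hA.ringKrullDim_quotient_maximalMinors_add_le.trans hR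
  rwa [Nat.cast_add, ENat.WithBot.add_le_add_natCast_right_iff] at h

lemma IsPartialSOP.submatrix (hA : IsPartialSOP fun ij : Fin a × Fin b ↦ A ij.1 ij.2)
    {c d : ℕ} (ρ : Fin c ↪ Fin a) (γ : Fin d ↪ Fin b) :
    IsPartialSOP fun ij : Fin c × Fin d ↦ A.submatrix ρ γ ij.1 ij.2 :=
  hA.comp_embedding (ρ.prodMap γ)

lemma DepthGE.quotient_maximalMinors {d : ℕ} (hdepth : DepthGE R d R) (hdim : ringKrullDim R ≤ d)
    (hA : IsPartialSOP fun ij : Fin a × Fin b ↦ A ij.1 ij.2) (hn : n + (a + 1 - b) = d) :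
    DepthGE R n (R ⧸ maximalMinors A) := by
  induction a generalizing b n with
  | zero => exact .quotient_maximalMinors_of_eq_zero_or_lt (by lia) (hdepth.mono (by lia))
  | succ a ih =>
    by_cases hab : b = 0 ∨ a + 1 < b
    · exact .quotient_maximalMinors_of_eq_zero_or_lt hab (hdepth.mono (by lia))
    obtain ⟨b, rfl⟩ := Nat.exists_eq_succ_of_ne_zero (fun hb ↦ hab (.inl hb))
    have hrows := hA.submatrix (Fin.succEmb a) (.refl _)
    have hboth := hA.submatrix (Fin.succEmb a) (Fin.succEmb b)
    have hsup : maximalMinors (A.submatrix Fin.succ id) ⊔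
        Ideal.span (Set.range fun τ : Fin b ↪ Fin a ↦
          ((A.submatrix Fin.succ Fin.succ).submatrix τ id).det) =
        maximalMinors (A.submatrix Fin.succ Fin.succ) :=
      sup_eq_right.mpr (maximalMinors_le_submatrix_succ (A.submatrix Fin.succ id))
    rw [maximalMinors_eq_sup_span]
    refine DepthGE.quotient_sup_span (fun τ υ ↦ firstRowMinor_mul_det_sub_mem A τ υ)
      (ih hrows (by lia)) ?_ ?_ ?_
    · rw [hsup]
      exact ih hboth (by lia)
    · rw [hsup]
      exact hboth.ringKrullDim_quotient_maximalMinors_le (hdim.trans (by norm_cast; lia))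
    · rw [← maximalMinors_eq_sup_span]
      exact hA.ringKrullDim_quotient_maximalMinors_le (hdim.trans (by norm_cast; lia))

end Depth

theorem IsCohenMacaulayLocalRing.quotient_maximalMinors (hR : IsCohenMacaulayLocalRing R)
    (hb : b ≠ 0) (hA : IsPartialSOP fun ij : Fin a × Fin b ↦ A ij.1 ij.2) :
    IsCohenMacaulayLocalRing (R ⧸ maximalMinors A) := by
  obtain ⟨-, hnoeth, rs, -, hreg, hlen⟩ := hR
  have : Nonempty (Fin b) := Fin.pos_iff_nonempty.mp (Nat.pos_of_ne_zero hb)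
  have hne : maximalMinors A ≠ ⊤ := ne_top_of_le_ne_top (maximalIdeal.isMaximal R).ne_top
    (maximalMinors_le_of_forall_mem A fun i j ↦ hA.1 (i, j))
  have : Nontrivial (R ⧸ maximalMinors A) := Ideal.Quotient.nontrivial_iff.mpr hne
  have hle : a + 1 - b ≤ rs.length := by
    have h := hA.ringKrullDim_quotient_maximalMinors_add_le
    rw [← hlen] at h
    exact Nat.cast_le.mp ((le_add_of_nonneg_left ringKrullDim_nonneg_of_nontrivial).trans h)
  obtain ⟨n, hn⟩ := Nat.exists_eq_add_of_le' hle
  exact ((DepthGE.of_isRegular hreg).quotient_maximalMinors hlen.ge hA hn.symm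
    ).isCohenMacaulayLocalRing_quotient hne
    (hA.ringKrullDim_quotient_maximalMinors_le (hn ▸ hlen.ge))

end Determinantal

section Generic

open IsLocalRing RingTheory.Sequence

lemma isWeaklyRegular_map_X {R σ : Type*} [CommRing R] {l : List σ} (hl : l.Nodup) :
    IsWeaklyRegular (MvPolynomial σ R) (l.map (MvPolynomial.X : σ → MvPolynomial σ R)) := by
  refine ⟨fun i hi ↦ ?_⟩
  rw [List.length_map] at hi
  have hI : Ideal.ofList ((l.map (MvPolynomial.X : σ → MvPolynomial σ R)).take i) =
      Ideal.span (MvPolynomial.X '' {s | s ∈ l.take i}) := by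
    simp only [Ideal.ofList, ← List.map_take, List.mem_map, Set.image, Set.mem_ofPred_eq]
  have hnot : l[i] ∉ l.take i := by
    intro h
    obtain ⟨j, hj, hji⟩ := List.mem_take_iff_getElem.mp h
    have := hl.getElem_inj_iff.mp hji
    lia
  rw [isSMulRegular_iff_right_eq_zero_of_smul]
  intro y hy
  obtain ⟨f, rfl⟩ := Submodule.Quotient.mk_surjective _ y
  rw [← Submodule.Quotient.mk_smul, Submodule.Quotient.mk_eq_zero] at hy
  rw [Submodule.Quotient.mk_eq_zero]
  rw [smul_eq_mul, Ideal.mul_top, hI, MvPolynomial.mem_ideal_span_X_image] at hy ⊢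
  intro m hm
  obtain ⟨k, hk, hk0⟩ := hy (m + Finsupp.single l[i] 1) <| by
    rwa [List.getElem_map, smul_eq_mul, mul_comm, MvPolynomial.mem_support_iff,
      MvPolynomial.coeff_mul_X, ← MvPolynomial.mem_support_iff]
  have hne : l[i] ≠ k := fun h ↦ hnot (h ▸ hk)
  exact ⟨k, hk, by simpa [Finsupp.single_apply, hne] using hk0⟩

lemma ofList_map_toList_univ {R ι : Type*} [CommRing R] [Fintype ι] (x : ι → R) :
    Ideal.ofList (Finset.univ.toList.map x) = Ideal.span (Set.range x) := by
  simp [Ideal.ofList, Set.range]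

section Regular

variable {R : Type*} [CommRing R] [IsLocalRing R] [IsNoetherianRing R] {ι : Type*} [Fintype ι]
  {x : ι → R}

lemma IsPartialSOP.of_isRegular (h : IsRegular R (Finset.univ.toList.map x)) :
    IsPartialSOP x := by
  refine ⟨fun i ↦ mem_maximalIdeal_of_isRegular h (List.mem_map_of_mem (by simp)), le_of_eq ?_⟩
  rw [← ringKrullDim_add_length_eq_ringKrullDim_of_isRegular _ h, ofList_map_toList_univ,
    List.length_map, Finset.length_toList, Finset.card_univ]

lemma IsCohenMacaulayLocalRing.of_isRegular {rs : List R} (h : IsRegular R rs)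
    (hrs : Ideal.ofList rs = maximalIdeal R) : IsCohenMacaulayLocalRing R := by
  refine ⟨inferInstance, inferInstance, rs, fun _ ↦ mem_maximalIdeal_of_isRegular h, h, ?_⟩
  rw [← ringKrullDim_add_length_eq_ringKrullDim_of_isRegular _ h, hrs,
    ringKrullDim_eq_zero_of_isField ((Ideal.Quotient.maximal_ideal_iff_isField_quotient _).mp
      inferInstance), zero_add]
  rfl

end Regular

lemma nonempty_localization_comap_quotient_equiv {R : Type*} [CommRing R] (I : Ideal R)
    (P : Ideal (R ⧸ I)) [P.IsPrime] :
    Nonempty ((Localization.AtPrime (P.comap (Ideal.Quotient.mk I)) ⧸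
      I.map (algebraMap R (Localization.AtPrime (P.comap (Ideal.Quotient.mk I))))) ≃+*
        Localization.AtPrime P) := by
  have hmap : Algebra.algebraMapSubmonoid (R ⧸ I) (P.comap (Ideal.Quotient.mk I)).primeCompl =
      P.primeCompl :=
    Submonoid.map_comap_eq_of_surjective Ideal.Quotient.mk_surjective P.primeCompl
  have : IsLocalization P.primeCompl (Localization.AtPrime (P.comap (Ideal.Quotient.mk I)) ⧸
      I.map (algebraMap R (Localization.AtPrime (P.comap (Ideal.Quotient.mk I))))) :=
    hmap ▸ inferInstance
  exact ⟨(IsLocalization.algEquiv P.primeCompl _ _).toRingEquiv⟩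

lemma isRegular_algebraMap_X {R σ : Type*} [CommRing R] [Fintype σ] (P : Ideal (MvPolynomial σ R))
    [P.IsPrime] (hP : ∀ s, MvPolynomial.X s ∈ P) :
    IsRegular (Localization.AtPrime P) (Finset.univ.toList.map fun s ↦
      algebraMap (MvPolynomial σ R) (Localization.AtPrime P) (MvPolynomial.X s)) := by
  have hmem : ∀ r ∈ Finset.univ.toList.map (MvPolynomial.X : σ → MvPolynomial σ R), r ∈ P :=
    List.forall_mem_map.mpr fun s _ ↦ hP s
  simpa only [List.map_map, Function.comp_def] using
    (isWeaklyRegular_map_X (Finset.nodup_toList _)).isRegular_of_isLocalization_of_mem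
      (Localization.AtPrime P) P hmem

variable {K : Type u} [Field K] {p q : ℕ}

lemma isCohenMacaulayLocalRing_quotient_map_maximalMinors_mvPolynomialX (hq : q ≠ 0)
    (P : Ideal (MvPolynomial (Fin p × Fin q) K)) [P.IsPrime]
    (hP : P = Ideal.span (Set.range MvPolynomial.X)) :
    IsCohenMacaulayLocalRing (Localization.AtPrime P ⧸
      (maximalMinors (Matrix.mvPolynomialX (Fin p) (Fin q) K)).map
        (algebraMap _ (Localization.AtPrime P))) := by
  let x : Fin p × Fin q → Localization.AtPrime P := fun ij ↦
    algebraMap (MvPolynomial (Fin p × Fin q) K) _ (MvPolynomial.X ij)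
  have hmax : Ideal.span (Set.range x) = maximalIdeal (Localization.AtPrime P) :=
    calc Ideal.span (Set.range x)
        = (Ideal.span (Set.range MvPolynomial.X)).map (algebraMap _ (Localization.AtPrime P)) := by
          rw [Ideal.map_span, ← Set.range_comp]
          rfl
      _ = P.map (algebraMap _ (Localization.AtPrime P)) := congrArg (Ideal.map _) hP.symm
      _ = maximalIdeal (Localization.AtPrime P) := Localization.AtPrime.map_eq_maximalIdeal
  have hreg : IsRegular (Localization.AtPrime P) (Finset.univ.toList.map x) :=
    isRegular_algebraMap_X P fun ij ↦ hP ▸ Ideal.subset_span ⟨ij, rfl⟩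
  have : IsNoetherianRing (Localization.AtPrime P) :=
    IsLocalization.isNoetherianRing P.primeCompl _ inferInstance
  have hCM : IsCohenMacaulayLocalRing (Localization.AtPrime P) :=
    .of_isRegular hreg ((ofList_map_toList_univ x).trans hmax)
  have hx : IsPartialSOP x := .of_isRegular hreg
  rw [← maximalMinors_map]
  exact hCM.quotient_maximalMinors hq hx

theorem determinantalRing_isCohenMacaulay_general
    (P : Ideal (MvPolynomial (Fin p × Fin q) K ⧸
      maximalMinors (Matrix.mvPolynomialX (Fin p) (Fin q) K)))
    (hprime : P.IsPrime)
    (hP : P = (Ideal.span (Set.range MvPolynomial.X)).map (Ideal.Quotient.mk _)) :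
    IsCohenMacaulayLocalRing (Localization.AtPrime P) := by
  let X := Matrix.mvPolynomialX (Fin p) (Fin q) K
  have hq : q ≠ 0 := by
    rintro rfl
    have : Subsingleton (MvPolynomial (Fin p × Fin 0) K ⧸ maximalMinors X) :=
      Ideal.Quotient.subsingleton_iff.mpr (maximalMinors_eq_top_of_isEmpty X)
    exact hprime.ne_top (Subsingleton.elim _ _)
  have : Nonempty (Fin q) := Fin.pos_iff_nonempty.mp (Nat.pos_of_ne_zero hq)
  have hle : maximalMinors X ≤ Ideal.span (Set.range MvPolynomial.X) :=
    maximalMinors_le_of_forall_mem X fun i j ↦ Ideal.subset_span ⟨(i, j), rfl⟩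
  have hcomap : P.comap (Ideal.Quotient.mk _) = Ideal.span (Set.range MvPolynomial.X) := by
    rw [hP, Ideal.comap_map_of_surjective _ Ideal.Quotient.mk_surjective,
      ← RingHom.ker_eq_comap_bot, Ideal.mk_ker, sup_eq_left.mpr hle]
  obtain ⟨e⟩ := nonempty_localization_comap_quotient_equiv (maximalMinors X) P
  exact .of_ringEquiv e <|
    isCohenMacaulayLocalRing_quotient_map_maximalMinors_mvPolynomialX hq _ hcomap

end Generic

/-- For `p ≥ q ≥ 1`, the localization of the generic determinantal ring
`R/I` at the maximal ideal `𝔪/I` (where `𝔪 = (x_{ij})` is the ideal of the origin)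
is a Cohen–Macaulay local ring. (The primality of `𝔪/I`, needed to form the
localization, is recorded as the hypothesis `hp`.) -/
theorem determinantalRing_isCohenMacaulay (p q : ℕ) (hq : 1 ≤ q) (hpq : q ≤ p)
    (hp : (originIdealMod p q).IsPrime) :
    IsCohenMacaulayLocalRing
      (@Localization.AtPrime (MvPolynomial (Fin p × Fin q) ℂ ⧸ maximalMinorsIdeal p q) _
        (originIdealMod p q) hp) :=
  determinantalRing_isCohenMacaulay_general (originIdealMod p q) hp rfl
end
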